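/- arXiv:1801.04501 — 4 statements merged into one kernel-verified Lean document; each statement's English description precedes it below -/
import Mathlib

section
/- Under the log-moment condition, for every λ ≥ 0 the identity ∫_0^λ φ(z)/ω(z) dz = (2/σ²) ∫_0^∞ (1 − e^{−λz}) (e^{−Kz}/z) ( δ + ∫_0^z e^{Ku} μ̄(u) du ) dz holds, and both sides are finite. -/
open MeasureTheory Set

/-- Layer cake formula in the form used below. -/
lemma aux_cake (μ : Measure ℝ) (g : ℝ → ℝ)
    (hg : ∀ t > 0, IntervalIntegrable g volume 0 t) (g0 : ∀ t, 0 < t → 0 ≤ g t) :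
    ∫⁻ u in Ioi (0:ℝ), ENNReal.ofReal (∫ t in (0:ℝ)..u, g t) ∂μ =
      ∫⁻ t in Ioi (0:ℝ), μ (Ioi t) * ENNReal.ofReal (g t) := by
  have h := lintegral_comp_eq_lintegral_meas_lt_mul (f := fun u : ℝ => u) (g := g)
    (μ.restrict (Ioi 0))
    ((ae_restrict_iff' measurableSet_Ioi).2 (ae_of_all _ fun x hx => le_of_lt hx))
    measurable_id.aemeasurable hg
    ((ae_restrict_iff' measurableSet_Ioi).2 (ae_of_all _ fun x hx => g0 x hx))
  rw [h]
  refine setLIntegral_congr_fun measurableSet_Ioi fun t ht => ?_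
  have ht : 0 < t := ht
  have : (μ.restrict (Ioi 0)) {a | t < a} = μ (Ioi t) := by
    rw [Measure.restrict_apply (show MeasurableSet {a : ℝ | t < a} from measurableSet_Ioi)]
    congr 1
    ext a
    simp only [mem_inter_iff, mem_ofPred_eq, mem_Ioi]
    exact ⟨fun h => h.1, fun h => ⟨h, ht.trans h⟩⟩
  simp only [this]

lemma aux_meas (μ : Measure ℝ) : Measurable fun t : ℝ => μ (Ioi t) := by
  have : Antitone fun t : ℝ => μ (Ioi t) := fun a b h => measure_mono (Ioi_subset_Ioi h)
  exact this.measurable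

/-- The tail is integrable against `1/(1+u)`. -/
lemma aux_fin (μ : Measure ℝ)
    (hμint : ∫⁻ u in Ioi (0:ℝ), ENNReal.ofReal (min 1 u) ∂μ < ⊤)
    (hlog : ∫⁻ u in Ioi (1:ℝ), ENNReal.ofReal (Real.log u) ∂μ < ⊤) :
    ∫⁻ t in Ioi (0:ℝ), μ (Ioi t) * ENNReal.ofReal (1 / (1 + t)) < ⊤ := by
  have hd : ∀ x : ℝ, 0 ≤ x → HasDerivAt (fun x => Real.log (1 + x)) (1 / (1 + x)) x := by
    intro x hx
    exact ((hasDerivAt_id x).const_add 1).log (by simp; linarith)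
  have hii : ∀ t : ℝ, 0 ≤ t → IntervalIntegrable (fun t : ℝ => 1 / (1 + t)) volume 0 t := by
    intro t ht
    apply ContinuousOn.intervalIntegrable
    rw [uIcc_of_le ht]
    intro x hx
    have : 1 + x ≠ 0 := by linarith [hx.1]
    exact (ContinuousAt.div continuousAt_const (by fun_prop) this).continuousWithinAt
  rw [← aux_cake μ _ (fun t ht => hii t ht.le) (fun t ht => by positivity)]
  have hle : ∫⁻ u in Ioi (0:ℝ), ENNReal.ofReal (∫ t in (0:ℝ)..u, 1 / (1 + t)) ∂μ ≤
      ∫⁻ u in Ioi (0:ℝ), (ENNReal.ofReal (min 1 u) +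
        (Ioi (1:ℝ)).indicator (fun u => ENNReal.ofReal (Real.log u)) u) ∂μ := by
    refine setLIntegral_mono' measurableSet_Ioi fun u hu => ?_
    have hu : 0 < u := hu
    rw [intervalIntegral.integral_eq_sub_of_hasDerivAt (f := fun x => Real.log (1 + x))
      (fun x hx => hd x (by rw [uIcc_of_le hu.le] at hx; exact hx.1)) (hii u hu.le)]
    simp only [add_zero, Real.log_one, sub_zero]
    by_cases h1 : 1 < u
    · rw [indicator_of_mem (by exact h1), min_eq_left h1.le,
        ← ENNReal.ofReal_add (by norm_num) (Real.log_nonneg h1.le)]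
      apply ENNReal.ofReal_le_ofReal
      have : Real.log (1 + u) ≤ Real.log (2 * u) := Real.log_le_log (by linarith) (by linarith)
      rw [Real.log_mul (by norm_num) (by linarith)] at this
      have := Real.log_le_sub_one_of_pos (x := 2) (by norm_num)
      linarith
    · rw [indicator_of_notMem (by exact h1), add_zero, min_eq_right (not_lt.1 h1)]
      apply ENNReal.ofReal_le_ofReal
      have := Real.log_le_sub_one_of_pos (x := 1 + u) (by linarith)
      linarith
  refine hle.trans_lt ?_
  rw [lintegral_add_left (by fun_prop)]
  refine ENNReal.add_lt_top.2 ⟨hμint, ?_⟩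
  rw [lintegral_indicator measurableSet_Ioi, Measure.restrict_restrict measurableSet_Ioi,
    inter_eq_left.2 (Ioi_subset_Ioi zero_le_one)]
  exact hlog

lemma aux_tail (μ : Measure ℝ)
    (hμint : ∫⁻ u in Ioi (0:ℝ), ENNReal.ofReal (min 1 u) ∂μ < ⊤) (x : ℝ) (hx : 0 < x) :
    μ (Ioi x) < ⊤ := by
  have h1 : ENNReal.ofReal (min 1 x) * μ (Ioi x) ≤
      ∫⁻ u in Ioi (0:ℝ), ENNReal.ofReal (min 1 u) ∂μ := by
    rw [← setLIntegral_const]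
    refine (setLIntegral_mono' measurableSet_Ioi fun u hu => ?_).trans
      (lintegral_mono_set (Ioi_subset_Ioi hx.le))
    exact ENNReal.ofReal_le_ofReal (min_le_min le_rfl (le_of_lt hu))
  have h2 := h1.trans_lt hμint
  refine ENNReal.lt_top_of_mul_ne_top_right h2.ne ?_
  have : 0 < min 1 x := by positivity
  simpa using this

/-- Comparison with the weight `1/(1+u)`. -/
lemma aux_comp (M : ℝ → ENNReal) (s : Set ℝ) (hs : MeasurableSet s) (hs0 : s ⊆ Ioi 0)
    (hM : ∫⁻ t in Ioi (0:ℝ), M t * ENNReal.ofReal (1 / (1 + t)) < ⊤)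
    (g : ℝ → ℝ) (C : ℝ) (hg : ∀ u ∈ s, g u ≤ C * (1 / (1 + u))) (hC : 0 ≤ C) :
    ∫⁻ u in s, ENNReal.ofReal (g u) * M u < ⊤ := by
  have : ∫⁻ u in s, ENNReal.ofReal (g u) * M u ≤
      ∫⁻ u in Ioi (0:ℝ), ENNReal.ofReal C * (M u * ENNReal.ofReal (1 / (1 + u))) := by
    refine (setLIntegral_mono' hs fun u hu => ?_).trans (lintegral_mono_set hs0)
    calc _ ≤ ENNReal.ofReal (C * (1 / (1 + u))) * M u := by
          gcongr; exact hg u hu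
      _ = _ := by rw [ENNReal.ofReal_mul hC]; ring
  refine this.trans_lt ?_
  rw [lintegral_const_mul' _ _ ENNReal.ofReal_ne_top]
  exact ENNReal.mul_lt_top ENNReal.ofReal_lt_top hM

lemma aux_exp_Ioi (a u : ℝ) (ha : 0 < a) :
    ∫⁻ x in Ioi u, ENNReal.ofReal (Real.exp (-(a * x))) =
      ENNReal.ofReal (1 / a) * ENNReal.ofReal (Real.exp (-(a * u))) := by
  have h1 := integral_exp_mul_Ioi (a := -a) (by linarith) u
  have h2 := integrableOn_exp_mul_Ioi (a := -a) (by linarith) u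
  have h3 := ofReal_integral_eq_lintegral_ofReal h2 (ae_of_all _ fun x => (Real.exp_pos _).le)
  simp only [← neg_mul]
  rw [← h3, h1, ← ENNReal.ofReal_mul (by positivity)]
  congr 1
  field_simp

/-- Laplace transform of the convolution. -/
lemma aux_conv (M : ℝ → ENNReal) (hM : Measurable M) (K z δ : ℝ) (hK : 0 < K) (hz : 0 < z) :
    ∫⁻ x in Ioi (0:ℝ), ENNReal.ofReal (Real.exp (-(z * x))) *
      (ENNReal.ofReal (Real.exp (-(K * x))) * (ENNReal.ofReal δ +
        ∫⁻ u in Ioc 0 x, ENNReal.ofReal (Real.exp (K * u)) * M u)) =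
    ENNReal.ofReal (1 / (z + K)) * (ENNReal.ofReal δ +
      ∫⁻ u in Ioi (0:ℝ), ENNReal.ofReal (Real.exp (-(z * u))) * M u) := by
  have hzK : 0 < z + K := by linarith
  have e1 : ∀ x : ℝ, ENNReal.ofReal (Real.exp (-(z * x))) *
      (ENNReal.ofReal (Real.exp (-(K * x))) * (ENNReal.ofReal δ +
        ∫⁻ u in Ioc 0 x, ENNReal.ofReal (Real.exp (K * u)) * M u)) =
      ENNReal.ofReal (Real.exp (-((z + K) * x))) * ENNReal.ofReal δ +
       ∫⁻ u in Ioi (0:ℝ), (if u ≤ x then 1 else 0) * (ENNReal.ofReal (Real.exp (-((z + K) * x))) *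
        (ENNReal.ofReal (Real.exp (K * u)) * M u)) := by
    intro x
    have hi : ∫⁻ u in Ioi (0:ℝ), (if u ≤ x then 1 else 0) *
        (ENNReal.ofReal (Real.exp (-((z + K) * x))) *
        (ENNReal.ofReal (Real.exp (K * u)) * M u)) =
        ENNReal.ofReal (Real.exp (-((z + K) * x))) *
          ∫⁻ u in Ioc 0 x, ENNReal.ofReal (Real.exp (K * u)) * M u := by
      rw [← lintegral_const_mul' _ _ ENNReal.ofReal_ne_top, ← Ioi_inter_Iic, inter_comm,
        ← Measure.restrict_restrict measurableSet_Iic, ← lintegral_indicator measurableSet_Iic]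
      refine lintegral_congr fun u => ?_
      by_cases h : u ≤ x
      · rw [indicator_of_mem (by exact h)]; simp [h]
      · rw [indicator_of_notMem (by exact h)]; simp [h]
    rw [hi, ← mul_assoc, ← ENNReal.ofReal_mul (Real.exp_pos _).le, ← Real.exp_add, mul_add]
    ring_nf
  simp_rw [e1]
  rw [lintegral_add_left (by fun_prop), lintegral_mul_const _ (by fun_prop),
    aux_exp_Ioi _ _ hzK, mul_add]
  congr 1
  · simp
  rw [lintegral_lintegral_swap]
  · rw [← lintegral_const_mul' _ _ ENNReal.ofReal_ne_top]
    refine setLIntegral_congr_fun measurableSet_Ioi fun u hu => ?_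
    have hu : 0 < u := hu
    have e2 : ∫⁻ x in Ioi (0:ℝ), (if u ≤ x then 1 else 0) *
        (ENNReal.ofReal (Real.exp (-((z + K) * x))) *
        (ENNReal.ofReal (Real.exp (K * u)) * M u)) =
        (∫⁻ x in Ioi u, ENNReal.ofReal (Real.exp (-((z + K) * x)))) *
        (ENNReal.ofReal (Real.exp (K * u)) * M u) := by
      rw [setLIntegral_congr Ioi_ae_eq_Ici (s := Ioi u),
        ← lintegral_mul_const _ (by fun_prop),
        ← inter_eq_left.2 (show Ici u ⊆ Ioi 0 from fun x hx => hu.trans_le hx),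
        ← Measure.restrict_restrict measurableSet_Ici, ← lintegral_indicator measurableSet_Ici]
      refine lintegral_congr fun x => ?_
      by_cases h : u ≤ x
      · rw [indicator_of_mem (by exact h)]; simp [h]
      · rw [indicator_of_notMem (by exact h)]; simp [h]
    simp only [e2]
    rw [aux_exp_Ioi _ _ hzK, mul_assoc, ← mul_assoc (ENNReal.ofReal (Real.exp _)),
      ← ENNReal.ofReal_mul (Real.exp_pos _).le, ← Real.exp_add]
    ring_nf
  · apply Measurable.aemeasurable
    apply Measurable.mul
    · exact Measurable.ite (measurableSet_le measurable_snd measurable_fst)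
        measurable_const measurable_const
    · fun_prop

lemma aux_exp_Ioc (lam x : ℝ) (hlam : 0 ≤ lam) (hx : 0 < x) :
    ∫⁻ z in Ioc 0 lam, ENNReal.ofReal (Real.exp (-(z * x))) =
      ENNReal.ofReal ((1 - Real.exp (-(lam * x))) / x) := by
  have hc : Continuous fun z => Real.exp (-(z * x)) := by fun_prop
  have hi := (hc.intervalIntegrable (μ := volume) 0 lam)
  have hd : ∀ z, HasDerivAt (fun z => -Real.exp (-(z * x)) / x) (Real.exp (-(z * x))) z := by
    intro z
    have := ((((hasDerivAt_id z).mul_const x).neg.exp).neg).div_const x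
    refine HasDerivAt.congr_deriv (f := fun z => -Real.exp (-(z * x)) / x) this ?_
    simp only [id, Pi.neg_apply]
    field_simp
  rw [← ofReal_integral_eq_lintegral_ofReal
    ((intervalIntegrable_iff_integrableOn_Ioc_of_le hlam).1 hi)
    (ae_of_all _ fun x => (Real.exp_pos _).le), ← intervalIntegral.integral_of_le hlam,
    intervalIntegral.integral_eq_sub_of_hasDerivAt (fun z _ => hd z) hi]
  congr 1
  simp; ring

/-- Under the log-moment condition, for every λ ≥ 0 the identity
∫_0^λ φ(z)/ω(z) dz = (2/σ²) ∫_0^∞ (1 − e^{−λz}) (e^{−Kz}/z)(δ + ∫_0^z e^{Ku} μ̄(u) du) dz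
holds, and both sides are finite. -/
theorem stmt_0
    (μ : Measure ℝ) (δ c σ K : ℝ)
    (hμ0 : μ (Iic 0) = 0)
    (hμint : ∫⁻ u in Ioi (0:ℝ), ENNReal.ofReal (min 1 u) ∂μ < ⊤)
    (hδ : 0 ≤ δ) (hc : 0 < c) (hσ : 0 < σ)
    (hlog : ∫⁻ u in Ioi (1:ℝ), ENNReal.ofReal (Real.log u) ∂μ < ⊤)
    (hK : K = 2 * c / σ ^ 2)
    (φ ω μbar : ℝ → ℝ)
    (hφ : ∀ z, φ z = δ * z + ∫ u in Ioi (0:ℝ), (1 - Real.exp (-(z * u))) ∂μ)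
    (hω : ∀ z, ω z = c * z + σ ^ 2 * z ^ 2 / 2)
    (hμbar : ∀ x, μbar x = (μ (Ioi x)).toReal)
    (lam : ℝ) (hlam : 0 ≤ lam) :
    IntervalIntegrable (fun z => φ z / ω z) volume 0 lam ∧
    IntegrableOn
      (fun z => (1 - Real.exp (-(lam * z))) * (Real.exp (-(K * z)) / z) *
        (δ + ∫ u in (0:ℝ)..z, Real.exp (K * u) * μbar u)) (Ioi 0) volume ∧
    (∫ z in (0:ℝ)..lam, φ z / ω z) =
      (2 / σ ^ 2) * ∫ z in Ioi (0:ℝ),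
        (1 - Real.exp (-(lam * z))) * (Real.exp (-(K * z)) / z) *
          (δ + ∫ u in (0:ℝ)..z, Real.exp (K * u) * μbar u) := by
  have hKpos : 0 < K := by rw [hK]; positivity
  set M : ℝ → ENNReal := fun t => μ (Ioi t) with hMdef
  have hM : Measurable M := aux_meas μ
  have hMfin : ∀ x, 0 < x → M x < ⊤ := aux_tail μ hμint
  have hW := aux_fin μ hμint hlog
  change ∫⁻ t in Ioi (0:ℝ), M t * ENNReal.ofReal (1 / (1 + t)) < ⊤ at hW
  set L : ℝ → ENNReal := fun z => ∫⁻ u in Ioi (0:ℝ), ENNReal.ofReal (Real.exp (-(z * u))) * M u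
    with hL
  have hLm : Measurable L := by
    apply Measurable.lintegral_prod_right
    simp only [Function.uncurry_def]
    fun_prop
  have hLfin : ∀ z, 0 < z → L z < ⊤ := by
    intro z hz
    refine aux_comp M _ measurableSet_Ioi le_rfl hW _ (1 + 1 / z) (fun u hu => ?_) (by positivity)
    have hu : 0 < u := hu
    have h1 : Real.exp (-(z * u)) ≤ 1 / (1 + z * u) := by
      rw [Real.exp_neg, ← one_div]
      apply one_div_le_one_div_of_le (by positivity)
      linarith [Real.add_one_le_exp (z * u)]
    refine h1.trans ?_
    rw [mul_one_div, div_le_div_iff₀ (by positivity) (by positivity)]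
    have : (1 + 1 / z) * (1 + z * u) = 1 + z * u + 1 / z + u := by
      field_simp
      ring
    rw [this]
    have : 0 < 1 / z := by positivity
    nlinarith [mul_pos hz hu]
  set J : ℝ → ENNReal := fun x => ∫⁻ u in Ioc 0 x, ENNReal.ofReal (Real.exp (K * u)) * M u with hJ
  have hJfin : ∀ x, 0 < x → J x < ⊤ := by
    intro x hx
    refine aux_comp M _ measurableSet_Ioc Ioc_subset_Ioi_self hW _ (Real.exp (K * x) * (1 + x))
      (fun u hu => ?_) (by positivity)
    have hu0 : 0 < u := hu.1
    rw [mul_one_div, le_div_iff₀ (by positivity)]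
    have := hu.2
    gcongr
  have hJm : Measurable J := by
    have : Monotone J := fun a b h => lintegral_mono_set (Ioc_subset_Ioc_right h)
    exact this.measurable
  set G : ℝ → ENNReal := fun x => ENNReal.ofReal (Real.exp (-(K * x))) * (ENNReal.ofReal δ + J x)
    with hG
  have hGm : Measurable G := by fun_prop
  set A : ℝ → ENNReal := fun z => ENNReal.ofReal (2 / σ ^ 2) *
    (ENNReal.ofReal (1 / (z + K)) * (ENNReal.ofReal δ + L z)) with hA
  have hAm : Measurable A := by fun_prop
  set B : ℝ → ENNReal := fun x => ENNReal.ofReal ((1 - Real.exp (-(lam * x))) / x) * G x with hB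
  have hBm : Measurable B := by fun_prop
  -- pointwise identification of the two integrands
  have hF : ∀ z, 0 < z → φ z / ω z = (A z).toReal := by
    intro z hz
    have h1 : ∫ u in Ioi (0:ℝ), (1 - Real.exp (-(z * u))) ∂μ = z * (L z).toReal := by
      rw [integral_eq_lintegral_of_nonneg_ae]
      · have hi : ∀ t, IntervalIntegrable (fun t => z * Real.exp (-(z * t))) volume 0 t :=
          fun t => Continuous.intervalIntegrable (by fun_prop) _ _
        have := aux_cake μ (fun t => z * Real.exp (-(z * t))) (fun t _ => hi t)
          (fun t _ => by positivity)
        have h2 : ∀ u : ℝ, ∫ t in (0:ℝ)..u, z * Real.exp (-(z * t)) = 1 - Real.exp (-(z * u)) := by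
          intro u
          have hd : ∀ t, HasDerivAt (fun t => -Real.exp (-(z * t))) (z * Real.exp (-(z * t))) t := by
            intro t
            have := (((hasDerivAt_id t).const_mul z).neg.exp).neg
            refine HasDerivAt.congr_deriv (f := fun t => -Real.exp (-(z * t))) this ?_
            simp only [id, Pi.neg_apply]
            ring
          rw [intervalIntegral.integral_eq_sub_of_hasDerivAt (fun t _ => hd t) (hi u)]
          simp; ring
        simp_rw [h2] at this
        rw [this]
        have h3 : ∫⁻ t in Ioi (0:ℝ), μ (Ioi t) * ENNReal.ofReal (z * Real.exp (-(z * t))) =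
            ENNReal.ofReal z * L z := by
          rw [hL, ← lintegral_const_mul' _ _ ENNReal.ofReal_ne_top]
          refine lintegral_congr fun t => ?_
          rw [ENNReal.ofReal_mul hz.le]
          ring
        rw [h3, ENNReal.toReal_mul, ENNReal.toReal_ofReal hz.le]
      · refine (ae_restrict_iff' measurableSet_Ioi).2 (ae_of_all _ fun u hu => ?_)
        have hu : 0 < u := hu
        have : Real.exp (-(z * u)) ≤ 1 := Real.exp_le_one_iff.2 (by nlinarith [mul_pos hz hu])
        simpa using this
      · exact Continuous.aestronglyMeasurable (by fun_prop)
    rw [hφ, hω, h1]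
    simp only [hA]
    rw [ENNReal.toReal_mul, ENNReal.toReal_mul, ENNReal.toReal_add ENNReal.ofReal_ne_top
      (hLfin z hz).ne, ENNReal.toReal_ofReal (by positivity), ENNReal.toReal_ofReal (by positivity),
      ENNReal.toReal_ofReal hδ, hK]
    have : z + 2 * c / σ ^ 2 ≠ 0 := by positivity
    have : c * z + σ ^ 2 * z ^ 2 / 2 ≠ 0 := by positivity
    field_simp
    ring
  have hR : ∀ x, 0 < x → (1 - Real.exp (-(lam * x))) * (Real.exp (-(K * x)) / x) *
        (δ + ∫ u in (0:ℝ)..x, Real.exp (K * u) * μbar u) = (B x).toReal := by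
    intro x hx
    have h1 : ∫ u in (0:ℝ)..x, Real.exp (K * u) * μbar u = (J x).toReal := by
      rw [intervalIntegral.integral_of_le hx.le, hJ, ← integral_toReal]
      · refine integral_congr_ae (ae_of_all _ fun u => ?_)
        simp only [ENNReal.toReal_mul, ENNReal.toReal_ofReal (Real.exp_pos _).le, hμbar, hMdef]
      · fun_prop
      · refine (ae_restrict_iff' measurableSet_Ioc).2 (ae_of_all _ fun u hu => ?_)
        exact ENNReal.mul_lt_top ENNReal.ofReal_lt_top (hMfin u hu.1)
    have h2 : 0 ≤ 1 - Real.exp (-(lam * x)) := by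
      have : Real.exp (-(lam * x)) ≤ 1 := Real.exp_le_one_iff.2 (by nlinarith [mul_nonneg hlam hx.le])
      linarith
    rw [h1]
    simp only [hB, hG]
    rw [ENNReal.toReal_mul, ENNReal.toReal_mul, ENNReal.toReal_add ENNReal.ofReal_ne_top
      (hJfin x hx).ne, ENNReal.toReal_ofReal (by positivity), ENNReal.toReal_ofReal (by positivity),
      ENNReal.toReal_ofReal hδ]
    ring
  -- Tonelli
  have hAB : ∫⁻ z in Ioc 0 lam, A z = ENNReal.ofReal (2 / σ ^ 2) * ∫⁻ x in Ioi (0:ℝ), B x := by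
    have e1 : ∫⁻ z in Ioc 0 lam, A z = ENNReal.ofReal (2 / σ ^ 2) * ∫⁻ z in Ioc 0 lam,
        ∫⁻ x in Ioi (0:ℝ), ENNReal.ofReal (Real.exp (-(z * x))) * G x := by
      rw [← lintegral_const_mul' _ _ ENNReal.ofReal_ne_top]
      refine setLIntegral_congr_fun measurableSet_Ioc fun z hz => ?_
      simp only [hA, hG, hJ, hL]
      rw [aux_conv M hM K z δ hKpos hz.1]
    rw [e1, lintegral_lintegral_swap]
    · congr 1
      refine setLIntegral_congr_fun measurableSet_Ioi fun x hx => ?_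
      simp only [hB]
      rw [lintegral_mul_const _ (by fun_prop), aux_exp_Ioc lam x hlam hx]
    · apply Measurable.aemeasurable
      simp only [Function.uncurry_def]
      fun_prop
  -- finiteness
  have hAfin : ∫⁻ z in Ioc 0 lam, A z < ⊤ := by
    have e1 : ∫⁻ z in Ioc 0 lam, A z ≤ ∫⁻ z in Ioc 0 lam, ENNReal.ofReal (2 / σ ^ 2) *
        (ENNReal.ofReal (1 / K) * (ENNReal.ofReal δ + L z)) := by
      refine setLIntegral_mono' measurableSet_Ioc fun z hz => ?_
      simp only [hA]
      gcongr
      linarith [hz.1]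
    refine e1.trans_lt ?_
    rw [lintegral_const_mul' _ _ ENNReal.ofReal_ne_top, lintegral_const_mul' _ _ ENNReal.ofReal_ne_top,
      lintegral_add_left measurable_const, setLIntegral_const]
    refine ENNReal.mul_lt_top ENNReal.ofReal_lt_top (ENNReal.mul_lt_top ENNReal.ofReal_lt_top
      (ENNReal.add_lt_top.2 ⟨ENNReal.mul_lt_top ENNReal.ofReal_lt_top measure_Ioc_lt_top, ?_⟩))
    simp only [hL]
    rw [lintegral_lintegral_swap]
    · have e2 : ∫⁻ u in Ioi (0:ℝ), ∫⁻ z in Ioc 0 lam, ENNReal.ofReal (Real.exp (-(z * u))) * M u =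
          ∫⁻ u in Ioi (0:ℝ), ENNReal.ofReal ((1 - Real.exp (-(lam * u))) / u) * M u := by
        refine setLIntegral_congr_fun measurableSet_Ioi fun x hx => ?_
        rw [lintegral_mul_const _ (by fun_prop), aux_exp_Ioc lam x hlam hx]
      rw [e2]
      refine aux_comp M _ measurableSet_Ioi le_rfl hW _ (1 + lam) (fun u hu => ?_) (by positivity)
      have hu : 0 < u := hu
      rw [mul_one_div, div_le_div_iff₀ hu (by positivity)]
      have h1 := Real.add_one_le_exp (-(lam * u))
      have h2 := Real.exp_pos (-(lam * u))
      nlinarith [mul_pos hu h2]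
    · apply Measurable.aemeasurable
      simp only [Function.uncurry_def]
      fun_prop
  have hσ2 : 0 < 2 / σ ^ 2 := by positivity
  have hBfin : ∫⁻ x in Ioi (0:ℝ), B x < ⊤ := by
    rw [hAB] at hAfin
    refine ENNReal.lt_top_of_mul_ne_top_right hAfin.ne ?_
    simpa using hσ2
  have iA := integrable_toReal_of_lintegral_ne_top hAm.aemeasurable hAfin.ne
  have iB := integrable_toReal_of_lintegral_ne_top hBm.aemeasurable hBfin.ne
  refine ⟨?_, ?_, ?_⟩
  · rw [intervalIntegrable_iff_integrableOn_Ioc_of_le hlam]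
    exact IntegrableOn.congr_fun iA (fun z hz => (hF z hz.1).symm) measurableSet_Ioc
  · exact IntegrableOn.congr_fun iB (fun x hx => (hR x hx).symm) measurableSet_Ioi
  · rw [intervalIntegral.integral_of_le hlam,
      setIntegral_congr_fun measurableSet_Ioc (fun z hz => hF z hz.1),
      setIntegral_congr_fun measurableSet_Ioi (fun x hx => hR x hx),
      integral_toReal hAm.aemeasurable (ae_lt_top hAm hAfin.ne),
      integral_toReal hBm.aemeasurable (ae_lt_top hBm hBfin.ne), hAB, ENNReal.toReal_mul,
      ENNReal.toReal_ofReal hσ2.le]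
end

section
/- If 2δ > σ² (no log-moment condition assumed), then ∫_0^∞ χ(λ) dλ < ∞, where χ(λ) := exp{ −∫_1^λ φ(z)/ω(z) dz } for λ ≥ 1 and χ(λ) := exp{ ∫_λ^1 φ(z)/ω(z) dz } for 0 < λ < 1. -/
open MeasureTheory Set

lemma aux_bound (M z u : ℝ) (hM : 1 ≤ M) (hz : 0 ≤ z) (hzM : z ≤ M) (hu : 0 < u) :
    ‖1 - Real.exp (-(z * u))‖ ≤ M * min 1 u := by
  have h0 : Real.exp (-(z * u)) ≤ 1 := Real.exp_le_one_iff.2 (by have := mul_nonneg hz hu.le; linarith)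
  rw [Real.norm_of_nonneg (by linarith)]
  have h1 := Real.add_one_le_exp (-(z * u))
  have h2 := Real.exp_pos (-(z * u))
  have h3 : z * u ≤ M * u := by gcongr
  rcases min_cases 1 u with h | h <;> rw [h.1] <;> linarith

lemma aux_cont (μ : Measure ℝ)
    (hμint : ∫⁻ u in Ioi (0:ℝ), ENNReal.ofReal (min 1 u) ∂μ < ⊤) (M : ℝ) (hM : 1 ≤ M) :
    ContinuousOn (fun z => ∫ u in Ioi (0:ℝ), (1 - Real.exp (-(z * u))) ∂μ) (Icc 0 M) := by
  have hI : Integrable (fun u : ℝ => min 1 u) (μ.restrict (Ioi 0)) := by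
    refine ⟨by fun_prop, ?_⟩
    rw [hasFiniteIntegral_iff_ofReal]
    · exact hμint
    · filter_upwards [ae_restrict_mem measurableSet_Ioi] with u hu
      exact le_min zero_le_one (le_of_lt hu)
  refine continuousOn_of_dominated (bound := fun u => M * min 1 u) ?_ ?_ (hI.const_mul M) ?_
  · intro z _
    fun_prop
  · intro z hz
    filter_upwards [ae_restrict_mem measurableSet_Ioi] with u hu
    exact aux_bound M z u hM hz.1 hz.2 hu
  · refine Filter.Eventually.of_forall fun u => ?_
    fun_prop

lemma aux_main (F χ : ℝ → ℝ) (hF : ContinuousOn F (Ioi 0)) (ε M a : ℝ) (hε : 0 < ε)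
    (hM : 0 < M) (ha : 1 < a)
    (h0 : ∀ z, 0 < z → z ≤ ε → F z ≤ (1/2) * z⁻¹) (h1 : ∀ z, M ≤ z → a * z⁻¹ ≤ F z)
    (hχ : ∀ x, 0 < x → χ x = Real.exp (-(∫ z in (1:ℝ)..x, F z))) :
    IntegrableOn χ (Ioi 0) volume := by
  set G : ℝ → ℝ := fun x => ∫ z in (1:ℝ)..x, F z with hG
  have hd : ∀ x, 0 < x → HasDerivAt G (F x) x := by
    intro x hx
    refine intervalIntegral.integral_hasDerivAt_right ?_ ?_ (hF.continuousAt (Ioi_mem_nhds hx))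
    · refine ContinuousOn.intervalIntegrable (hF.mono ?_)
      intro y hy
      exact lt_of_lt_of_le (lt_min one_pos hx) hy.1
    · exact hF.stronglyMeasurableAtFilter isOpen_Ioi x hx
  have hdl : ∀ b x, 0 < x → HasDerivAt (fun x => G x - b * Real.log x) (F x - b * x⁻¹) x :=
    fun b x hx => (hd x hx).sub ((Real.hasDerivAt_log hx.ne').const_mul b)
  have hχc : ContinuousOn χ (Ioi 0) := by
    refine ContinuousOn.congr (f := fun x => Real.exp (-(G x))) ?_ (fun x hx => hχ x hx)
    intro x hx
    exact ((hd x hx).continuousAt.neg.rexp).continuousWithinAt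
  have key : ∀ b C x, 0 < x → C ≤ G x - b * Real.log x → ‖χ x‖ ≤ Real.exp (-C) * x ^ (-b) := by
    intro b C x hx h
    rw [hχ x hx, Real.norm_of_nonneg (Real.exp_pos _).le, Real.rpow_def_of_pos hx, ← Real.exp_add]
    apply Real.exp_le_exp.2
    change -(G x) ≤ _
    linarith
  have i1 : IntegrableOn χ (Ioc 0 ε) := by
    have hanti : AntitoneOn (fun x => G x - (1/2) * Real.log x) (Ioc 0 ε) := by
      refine antitoneOn_of_deriv_nonpos (convex_Ioc 0 ε) ?_ ?_ ?_
      · exact fun x hx => (hdl _ x hx.1).continuousAt.continuousWithinAt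
      · rw [interior_Ioc]
        exact fun x hx => (hdl _ x hx.1).differentiableAt.differentiableWithinAt
      · rw [interior_Ioc]
        intro x hx
        rw [(hdl _ x hx.1).deriv]
        linarith [h0 x hx.1 hx.2.le]
    have hi : IntegrableOn (fun x : ℝ => x ^ (-(1/2) : ℝ)) (Ioc 0 ε) := by
      have := intervalIntegral.intervalIntegrable_rpow' (a := 0) (b := ε) (r := -(1/2)) (by norm_num)
      exact (intervalIntegrable_iff_integrableOn_Ioc_of_le hε.le).1 this
    refine Integrable.mono' (hi.const_mul (Real.exp (-(G ε - (1/2) * Real.log ε)))) ?_ ?_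
    · exact (hχc.mono (fun x hx => hx.1)).aestronglyMeasurable measurableSet_Ioc
    · filter_upwards [ae_restrict_mem measurableSet_Ioc] with x hx
      exact key _ _ x hx.1 (hanti hx ⟨hε, le_rfl⟩ hx.2)
  have i2 : IntegrableOn χ (Icc ε M) :=
    (hχc.mono (fun x hx => lt_of_lt_of_le hε hx.1)).integrableOn_compact isCompact_Icc
  have i3 : IntegrableOn χ (Ioi M) := by
    have hmono : MonotoneOn (fun x => G x - a * Real.log x) (Ici M) := by
      refine monotoneOn_of_deriv_nonneg (convex_Ici M) ?_ ?_ ?_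
      · exact fun x hx => (hdl _ x (lt_of_lt_of_le hM hx)).continuousAt.continuousWithinAt
      · rw [interior_Ici]
        exact fun x hx => (hdl _ x (lt_trans hM hx)).differentiableAt.differentiableWithinAt
      · rw [interior_Ici]
        intro x hx
        rw [(hdl _ x (lt_trans hM hx)).deriv]
        linarith [h1 x (le_of_lt hx)]
    have hi : IntegrableOn (fun x : ℝ => x ^ (-a)) (Ioi M) :=
      integrableOn_Ioi_rpow_of_lt (by linarith) hM
    refine Integrable.mono' (hi.const_mul (Real.exp (-(G M - a * Real.log M)))) ?_ ?_
    · exact (hχc.mono (fun x hx => lt_trans hM hx)).aestronglyMeasurable measurableSet_Ioi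
    · filter_upwards [ae_restrict_mem measurableSet_Ioi] with x hx
      exact key _ _ x (lt_trans hM hx) (hmono self_mem_Ici (mem_Ici.2 (le_of_lt hx)) (le_of_lt hx))
  refine ((i1.union i2).union i3).mono_set ?_
  intro x hx
  by_cases h : x ≤ ε
  · exact Or.inl (Or.inl ⟨hx, h⟩)
  · by_cases h' : x ≤ M
    · exact Or.inl (Or.inr ⟨(not_le.1 h).le, h'⟩)
    · exact Or.inr (not_le.1 h')

/-- If 2δ > σ² (no log-moment condition assumed), then ∫_0^∞ χ(λ) dλ < ∞, where
χ(λ) = exp{−∫_1^λ φ/ω} for λ ≥ 1 and χ(λ) = exp{∫_λ^1 φ/ω} for 0 < λ < 1. -/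
theorem stmt_12
    (μ : Measure ℝ) (δ c σ : ℝ)
    (hμ0 : μ (Iic 0) = 0)
    (hμint : ∫⁻ u in Ioi (0:ℝ), ENNReal.ofReal (min 1 u) ∂μ < ⊤)
    (hδ : 0 ≤ δ) (hc : 0 < c) (hσ : 0 < σ)
    (h2δ : σ ^ 2 < 2 * δ)
    (φ ω χ : ℝ → ℝ)
    (hφ : ∀ z, φ z = δ * z + ∫ u in Ioi (0:ℝ), (1 - Real.exp (-(z * u))) ∂μ)
    (hω : ∀ z, ω z = c * z + σ ^ 2 * z ^ 2 / 2)
    (hχ1 : ∀ lam, 1 ≤ lam → χ lam = Real.exp (-(∫ z in (1:ℝ)..lam, φ z / ω z)))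
    (hχ2 : ∀ lam, 0 < lam → lam < 1 → χ lam = Real.exp (∫ z in lam..(1:ℝ), φ z / ω z)) :
    IntegrableOn χ (Ioi 0) volume := by
  have hωp : ∀ z, 0 < z → 0 < ω z := fun z hz => by rw [hω]; positivity
  have hg0 : ∀ z, 0 ≤ z → 0 ≤ ∫ u in Ioi (0:ℝ), (1 - Real.exp (-(z * u))) ∂μ := by
    intro z hz
    refine setIntegral_nonneg measurableSet_Ioi fun u hu => ?_
    have : Real.exp (-(z * u)) ≤ 1 :=
      Real.exp_le_one_iff.2 (by have := mul_nonneg hz (le_of_lt hu); linarith)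
    linarith
  have hφc : ∀ M, 1 ≤ M → ContinuousOn φ (Icc 0 M) := by
    intro M hM
    rw [funext hφ]
    exact (Continuous.continuousOn (by fun_prop)).add (aux_cont μ hμint M hM)
  have hωc : Continuous ω := by
    rw [funext hω]; fun_prop
  have hF : ContinuousOn (fun z => φ z / ω z) (Ioi 0) := by
    intro z hz
    have hz' : 0 < z := hz
    have : ContinuousAt φ z :=
      (hφc (z + 1) (by linarith)).continuousAt (Icc_mem_nhds hz' (by linarith))
    exact (this.div hωc.continuousAt (hωp z hz').ne').continuousWithinAt
  have hφ0 : φ 0 = 0 := by rw [hφ]; simp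
  obtain ⟨ε, hε, hε1, hεb⟩ : ∃ ε, 0 < ε ∧ ε ≤ 1 ∧ ∀ z, 0 < z → z ≤ ε → φ z ≤ c / 2 := by
    have h := (hφc 1 le_rfl) 0 ⟨le_rfl, zero_le_one⟩
    rw [Metric.continuousWithinAt_iff] at h
    obtain ⟨d, hd, h⟩ := h (c / 2) (by linarith)
    refine ⟨min 1 (d / 2), by positivity, min_le_left _ _, fun z hz hzd => ?_⟩
    have h2 := h (x := z) ⟨hz.le, hzd.trans (min_le_left _ _)⟩ (by
      have := hzd.trans (min_le_right _ _)
      rw [Real.dist_eq, sub_zero, abs_of_pos hz]; linarith)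
    rw [hφ0, Real.dist_eq, sub_zero] at h2
    exact (le_abs_self _).trans h2.le
  have hσ2 : 0 < σ ^ 2 := by positivity
  -- choose the exponent a as the midpoint of 1 and 2δ/σ²
  set a : ℝ := (1 + 2 * δ / σ ^ 2) / 2 with haDef
  have hr : 1 < 2 * δ / σ ^ 2 := (one_lt_div hσ2).2 h2δ
  have ha : 1 < a := by rw [haDef]; linarith
  have haσ : a * σ ^ 2 = (σ ^ 2 + 2 * δ) / 2 := by rw [haDef]; field_simp
  set k : ℝ := (2 * δ - σ ^ 2) / 4 with hk
  have hkp : 0 < k := by rw [hk]; linarith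
  refine aux_main (fun z => φ z / ω z) χ hF ε (a * c / k) a hε (by positivity) ha ?_ ?_ ?_
  · intro z hz hzε
    change φ z / ω z ≤ _
    rw [div_le_iff₀ (hωp z hz)]
    have e : (1/2) * z⁻¹ * ω z = c / 2 + σ ^ 2 * z / 4 := by
      rw [hω]; field_simp; ring
    rw [e]
    have : 0 ≤ σ ^ 2 * z / 4 := by positivity
    linarith [hεb z hz hzε]
  · intro z hz
    have hz0 : 0 < z := lt_of_lt_of_le (by positivity) hz
    change _ ≤ φ z / ω z
    rw [le_div_iff₀ (hωp z hz0)]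
    have e : a * z⁻¹ * ω z = a * c + a * σ ^ 2 * z / 2 := by
      rw [hω]; field_simp
    rw [e, haσ, hφ]
    have h3 := (div_le_iff₀ hkp).1 hz
    have h4 := hg0 z hz0.le
    rw [hk] at h3
    linarith
  · intro x hx
    rcases le_or_gt 1 x with h | h
    · exact hχ1 x h
    · rw [hχ2 x hx h, intervalIntegral.integral_symm]
end

section
/- For any λ > 0 there exists a unique non-negative C¹ function y_λ on (0,∞) satisfying the Riccati equation y′(z) = y(z)² − λ r(z)² for all z > 0 and y_λ(z) → 0 as z → ∞. Moreover y_λ is strictly positive on (0,∞); there exist 0 < z₁ ≤ z₂ < ∞ such that y_λ(z) ≤ √λ · r(z) for all z ∈ (0,z₁] ∪ [z₂,∞); y_λ is integrable on (0,1); and y_λ is decreasing on a neighborhood of 0 and on a neighborhood of ∞. -/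
open MeasureTheory Set

lemma ric_fence (g y : ℝ → ℝ) (a b : ℝ)
    (hganti : AntitoneOn g (Icc a b)) (hg0 : ∀ z ∈ Icc a b, 0 ≤ g z)
    (hy : ContinuousOn y (Icc a b))
    (hy' : ∀ z ∈ Ico a b, HasDerivWithinAt y ((y z) ^ 2 - (g z) ^ 2) (Ici z) z)
    (ha : g a < y a) : ∀ z ∈ Icc a b, y a ≤ y z := by
  have key := image_le_of_deriv_right_lt_deriv_boundary' (f := fun z => - y z)
    (f' := fun z => - ((y z) ^ 2 - (g z) ^ 2)) (a := a) (b := b) hy.neg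
    (fun z hz => (hy' z hz).neg) (B := fun _ => - y a) (B' := fun _ => 0) le_rfl
    continuousOn_const (fun z _ => hasDerivWithinAt_const _ _ _) (by
      intro z hz h
      have h1 : y z = y a := by simpa using h
      have hzz : z ∈ Icc a b := ⟨hz.1, hz.2.le⟩
      have h2 := hganti ⟨le_rfl, hz.1.trans hz.2.le⟩ hzz hz.1
      have h3 := hg0 z hzz
      simp only [h1]
      nlinarith)
  intro z hz
  have := key hz
  simpa using this

lemma ric_local (g : ℝ → ℝ) (a b : ℝ) (hab : a ≤ b) (hg : ContinuousOn g (Icc a b))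
    (hgpos : ∀ z ∈ Icc a b, 0 < g z) :
    ∃ y : ℝ → ℝ, y b = 0 ∧ (∀ z ∈ Icc a b, 0 ≤ y z) ∧
      ∀ z ∈ Icc a b, HasDerivWithinAt y ((y z) ^ 2 - (g z) ^ 2) (Icc a b) z := by
  obtain ⟨Q, hQ⟩ := isCompact_Icc.exists_bound_of_continuousOn (hg.pow 2)
  have hQ0 : 0 ≤ Q := (norm_nonneg _).trans (hQ a ⟨le_rfl, hab⟩)
  have hQ' : ∀ z ∈ Icc a b, (g z) ^ 2 ≤ Q := fun z hz => (le_abs_self _).trans (hQ z hz)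
  set M : ℝ := Q * (b - a) with hM
  have hM0 : 0 ≤ M := mul_nonneg hQ0 (by linarith)
  set cl : ℝ → ℝ := fun x => max 0 (min x M) with hcl
  have cl0 : ∀ x, 0 ≤ cl x := fun x => le_max_left _ _
  have clM : ∀ x, cl x ≤ M := fun x => max_le hM0 (min_le_right _ _)
  have clL : ∀ x y, |cl x - cl y| ≤ |x - y| := by
    intro x y
    refine (abs_max_sub_max_le_max _ _ _ _).trans ?_
    simp only [sub_self, abs_zero]
    refine max_le (abs_nonneg _) ?_
    refine (abs_min_sub_min_le_max _ _ _ _).trans ?_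
    simp
  set f : ℝ → ℝ → ℝ := fun t x => (cl x) ^ 2 - (g t) ^ 2 with hf
  set L : ℝ := M ^ 2 + Q with hL
  have hL0 : 0 ≤ L := by positivity
  have hPL : IsPicardLindelof f (tmin := a) (tmax := b) ⟨b, hab, le_rfl⟩ (0:ℝ)
      ⟨L * (b - a), mul_nonneg hL0 (by linarith)⟩ 0 ⟨L, hL0⟩ ⟨2 * M, by positivity⟩ := by
    refine ⟨?_, ?_, ?_, ?_⟩
    · intro t _
      refine LipschitzOnWith.of_dist_le_mul fun x _ y _ => ?_
      rw [Real.dist_eq, Real.dist_eq]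
      change |(cl x) ^ 2 - (g t) ^ 2 - ((cl y) ^ 2 - (g t) ^ 2)| ≤ 2 * M * |x - y|
      have : (cl x) ^ 2 - (g t) ^ 2 - ((cl y) ^ 2 - (g t) ^ 2) = (cl x + cl y) * (cl x - cl y) := by
        ring
      rw [this, abs_mul]
      refine mul_le_mul ?_ (clL x y) (abs_nonneg _) (by positivity)
      rw [abs_of_nonneg (add_nonneg (cl0 x) (cl0 y))]
      linarith [clM x, clM y]
    · intro x _
      exact continuousOn_const.sub (hg.pow 2)
    · intro t ht x _
      change |(cl x) ^ 2 - (g t) ^ 2| ≤ M ^ 2 + Q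
      have h1 : (cl x) ^ 2 ≤ M ^ 2 := pow_le_pow_left₀ (cl0 x) (clM x) 2
      have h2 := hQ' t ht
      rw [abs_le]
      constructor <;> nlinarith [sq_nonneg (cl x), sq_nonneg (g t), sq_nonneg M]
    · change L * max (b - b) (b - a) ≤ L * (b - a) - 0
      rw [sub_self, max_eq_right (by linarith), sub_zero]
  obtain ⟨y, hyb, hy⟩ := hPL.exists_eq_forall_mem_Icc_hasDerivWithinAt₀
  change y b = 0 at hyb
  have hyc : ContinuousOn y (Icc a b) := fun z hz => (hy z hz).continuousWithinAt
  have hyr : ∀ z ∈ Ico a b, HasDerivWithinAt y (f z (y z)) (Ici z) z := fun z hz =>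
    (hy z ⟨hz.1, hz.2.le⟩).mono_of_mem_nhdsWithin (Icc_mem_nhdsGE_of_mem hz)
  have h0 : ∀ z ∈ Icc a b, 0 ≤ y z := by
    intro w hw
    by_contra! hneg
    have key := image_le_of_deriv_right_lt_deriv_boundary' (f := y)
      (f' := fun z => f z (y z)) (a := w) (b := b) (hyc.mono (Icc_subset_Icc_left hw.1))
      (fun z hz => hyr z ⟨hw.1.trans hz.1, hz.2⟩) (B := fun _ => y w) (B' := fun _ => 0) le_rfl
      continuousOn_const (fun z _ => hasDerivWithinAt_const _ _ _) (by
        intro z hz h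
        have : cl (y z) = 0 := by
          rw [h]
          exact max_eq_left ((min_le_left _ _).trans hneg.le)
        have h3 := hgpos z ⟨hw.1.trans hz.1, hz.2.le⟩
        simp only [hf, this]
        nlinarith)
    have := key ⟨hw.2, le_rfl⟩
    linarith
  have hup : ∀ z ∈ Icc a b, y z ≤ M := by
    intro w hw
    have hmono : MonotoneOn (fun z => y z + Q * z) (Icc a b) := by
      refine monotoneOn_of_hasDerivWithinAt_nonneg (f' := fun z => f z (y z) + Q * 1)
        (convex_Icc a b) (hyc.add (by fun_prop)) ?_ ?_
      · intro z hz
        have hz' := interior_subset hz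
        exact ((hy z hz').mono interior_subset).add ((hasDerivWithinAt_id _ _).const_mul Q)
      · intro z hz
        have h2 := hQ' z (interior_subset hz)
        simp only [hf]
        nlinarith [sq_nonneg (cl (y z))]
    have := hmono hw ⟨hab, le_rfl⟩ hw.2
    simp only [hyb] at this
    nlinarith [hw.1]
  refine ⟨y, hyb, h0, fun z hz => ?_⟩
  have : cl (y z) = y z := by
    simp only [hcl]
    rw [min_eq_left (hup z hz), max_eq_right (h0 z hz)]
  have h := hy z hz
  simp only [hf, this] at h
  exact h

/-- difference of two solutions is expanding -/
lemma ric_diff (g y1 y2 : ℝ → ℝ) (a b : ℝ) (hab : a ≤ b)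
    (h1 : ∀ z ∈ Icc a b, 0 ≤ y1 z ∧ HasDerivWithinAt y1 ((y1 z) ^ 2 - (g z) ^ 2) (Icc a b) z)
    (h2 : ∀ z ∈ Icc a b, 0 ≤ y2 z ∧ HasDerivWithinAt y2 ((y2 z) ^ 2 - (g z) ^ 2) (Icc a b) z) :
    |y1 a - y2 a| ≤ |y1 b - y2 b| := by
  have hd : ∀ z ∈ Icc a b, HasDerivWithinAt (fun z => (y1 z - y2 z) ^ 2)
      (2 * (y1 z + y2 z) * (y1 z - y2 z) ^ 2) (Icc a b) z := by
    intro z hz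
    have := ((h1 z hz).2.sub (h2 z hz).2).pow 2
    refine this.congr_deriv ?_
    simp
    ring
  have hmono : MonotoneOn (fun z => (y1 z - y2 z) ^ 2) (Icc a b) := by
    refine monotoneOn_of_hasDerivWithinAt_nonneg
        (convex_Icc a b) (fun z hz => (hd z hz).continuousWithinAt)
        (fun z hz => (hd z (interior_subset hz)).mono interior_subset) ?_
    intro z hz
    have hz := interior_subset hz
    have := (h1 z hz).1
    have := (h2 z hz).1
    positivity
  exact sq_le_sq.mp (hmono ⟨le_rfl, hab⟩ ⟨hab, le_rfl⟩ hab)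

open Filter Topology in
lemma ric_exists (g : ℝ → ℝ) (hgc : ContinuousOn g (Ioi 0)) (hgpos : ∀ z ∈ Ioi (0:ℝ), 0 < g z)
    (z₂ : ℝ) (hz₂ : 0 < z₂) (hanti₂ : AntitoneOn g (Ici z₂)) (hlim : Tendsto g atTop (𝓝 0)) :
    ∃ y : ℝ → ℝ,
      (∀ z ∈ Ioi (0:ℝ), 0 ≤ y z ∧ HasDerivAt y ((y z) ^ 2 - (g z) ^ 2) z) ∧
      (∀ z ∈ Ici z₂, y z ≤ g z) := by
  set a : ℕ → ℝ := fun n => 1 / ((n:ℝ) + 1) with ha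
  set b : ℕ → ℝ := fun n => (n:ℝ) + 1 with hb
  have ha0 : ∀ n, 0 < a n := fun n => by simp only [ha]; positivity
  have hb1 : ∀ n, 1 ≤ b n := fun n => by simp only [hb]; linarith [Nat.cast_nonneg (α := ℝ) n]
  have hab : ∀ n, a n ≤ b n := fun n => by
    have : a n ≤ 1 := by
      simp only [ha]
      rw [div_le_one (by positivity)]
      exact hb1 n
    exact this.trans (hb1 n)
  have hbt : Tendsto b atTop atTop :=
    tendsto_atTop_add_const_right _ _ tendsto_natCast_atTop_atTop
  have hat : Tendsto a atTop (𝓝 0) := tendsto_one_div_add_atTop_nhds_zero_nat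
  have hbm : ∀ n k, n ≤ k → b n ≤ b k := fun n k h => by
    simp only [hb]
    have : (n:ℝ) ≤ k := by exact_mod_cast h
    linarith
  have ham : ∀ n k, n ≤ k → a k ≤ a n := fun n k h =>
    one_div_le_one_div_of_le (by positivity) (hbm n k h)
  have hsub : ∀ n, Icc (a n) (b n) ⊆ Ioi 0 := fun n z hz => (ha0 n).trans_le hz.1
  choose Y hYb hY0 hYd using fun n => ric_local g (a n) (b n) (hab n) (hgc.mono (hsub n))
    (fun z hz => hgpos z (hsub n hz))
  have hYc : ∀ n, ContinuousOn (Y n) (Icc (a n) (b n)) :=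
    fun n z hz => (hYd n z hz).continuousWithinAt
  have B1 : ∀ n, ∀ z ∈ Icc (a n) (b n), z₂ ≤ z → Y n z ≤ g z := by
    intro n z hz hzz
    by_contra! hlt
    have := ric_fence g (Y n) z (b n) (hanti₂.mono fun w hw => hzz.trans hw.1)
      (fun w hw => (hgpos w ((hsub n hz).trans_le hw.1)).le)
      ((hYc n).mono (Icc_subset_Icc_left hz.1))
      (fun w hw => (hYd n w ⟨hz.1.trans hw.1, hw.2.le⟩).mono_of_mem_nhdsWithin
        (Icc_mem_nhdsGE_of_mem ⟨hz.1.trans hw.1, hw.2⟩)) hlt (b n) ⟨hz.2, le_rfl⟩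
    have h2 := hgpos z (hsub n hz)
    rw [hYb] at this
    linarith
  have B2 : ∀ n k, n ≤ k → z₂ ≤ b n → ∀ z ∈ Icc (a n) (b n), |Y k z - Y n z| ≤ g (b n) := by
    intro n k hnk hzb z hz
    have hs : Icc z (b n) ⊆ Icc (a n) (b n) := Icc_subset_Icc_left hz.1
    have hs' : Icc z (b n) ⊆ Icc (a k) (b k) :=
      Icc_subset_Icc ((ham n k hnk).trans hz.1) (hbm n k hnk)
    have hbn : b n ∈ Icc (a k) (b k) := hs' ⟨hz.2, le_rfl⟩
    have := ric_diff g (Y k) (Y n) z (b n) hz.2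
      (fun w hw => ⟨hY0 k w (hs' hw), (hYd k w (hs' hw)).mono hs'⟩)
      (fun w hw => ⟨hY0 n w (hs hw), (hYd n w (hs hw)).mono hs⟩)
    rw [hYb, sub_zero, abs_of_nonneg (hY0 k _ hbn)] at this
    exact this.trans (B1 k _ hbn hzb)
  have hgb : Tendsto (fun n => g (b n)) atTop (𝓝 0) := hlim.comp hbt
  have hev : ∀ p q : ℝ, 0 < p → ∀ᶠ n in atTop, a n < p ∧ q < b n ∧ z₂ ≤ b n := by
    intro p q hp
    filter_upwards [hat.eventually (gt_mem_nhds hp), hbt.eventually_gt_atTop q,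
      hbt.eventually_ge_atTop z₂] with n h1 h2 h3 using ⟨h1, h2, h3⟩
  have hC : ∀ z : ℝ, ∃ l : ℝ, 0 < z → Tendsto (fun n => Y n z) atTop (𝓝 l) := by
    intro z
    by_cases hz : 0 < z
    · have : CauchySeq (fun n => Y n z) := by
        rw [Metric.cauchySeq_iff']
        intro ε hε
        obtain ⟨N, ⟨h1, h2, h3⟩, h4⟩ := ((hev z z hz).and (hgb.eventually (gt_mem_nhds hε))).exists
        exact ⟨N, fun n hn => (B2 N n hn h3 z ⟨h1.le, h2.le⟩).trans_lt h4⟩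
      obtain ⟨l, hl⟩ := cauchySeq_tendsto_of_complete this
      exact ⟨l, fun _ => hl⟩
    · exact ⟨0, fun h => absurd h hz⟩
  choose y hy using hC
  have B3 : ∀ n, z₂ ≤ b n → ∀ z ∈ Icc (a n) (b n), |y z - Y n z| ≤ g (b n) := by
    intro n hzb z hz
    have h1 : Tendsto (fun k => |Y k z - Y n z|) atTop (𝓝 |y z - Y n z|) :=
      ((hy z (hsub n hz)).sub_const _).abs
    refine le_of_tendsto h1 ?_
    filter_upwards [eventually_ge_atTop n] with k hk using B2 n k hk hzb z hz
  refine ⟨y, ?_, ?_⟩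
  · intro z hz
    rw [mem_Ioi] at hz
    constructor
    · refine ge_of_tendsto (hy z hz) ?_
      filter_upwards [hev z z hz] with n hn using hY0 n z ⟨hn.1.le, hn.2.1.le⟩
    · set p := z / 2
      set q := z + 1
      have hp : 0 < p := by positivity
      obtain ⟨N, hN⟩ := eventually_atTop.mp (hev p q hp)
      have hin : ∀ n, N ≤ n → Ioo p q ⊆ Icc (a n) (b n) := fun n hn w hw =>
        ⟨((hN n hn).1.trans hw.1).le, (hw.2.trans (hN n hn).2.1).le⟩
      have hU : TendstoLocallyUniformlyOn Y y atTop (Ioo p q) := by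
        refine TendstoUniformlyOn.tendstoLocallyUniformlyOn ?_
        rw [Metric.tendstoUniformlyOn_iff]
        intro ε hε
        filter_upwards [hgb.eventually (gt_mem_nhds hε), eventually_ge_atTop N] with n h1 h2 w hw
        exact (B3 n (hN n h2).2.2 w (hin n h2 hw)).trans_lt h1
      have hyc : ContinuousOn y (Ioo p q) := by
        refine hU.continuousOn ?_
        refine Eventually.frequently ?_
        filter_upwards [eventually_ge_atTop N] with n h2 using (hYc n).mono (hin n h2)
      have hU2 : TendstoLocallyUniformlyOn (fun n w => (Y n w) ^ 2 - (g w) ^ 2)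
          (fun w => (y w) ^ 2 - (g w) ^ 2) atTop (Ioo p q) := by
        have h1 := hU.mul₀ hU hyc hyc
        rw [Metric.tendstoLocallyUniformlyOn_iff] at h1 ⊢
        intro ε hε x hx
        obtain ⟨t, ht, h⟩ := h1 ε hε x hx
        refine ⟨t, ht, ?_⟩
        filter_upwards [h] with n hn w hw
        have := hn w hw
        rw [Real.dist_eq] at this ⊢
        convert this using 2
        simp only [Pi.mul_apply]
        ring
      have hzm : z ∈ Ioo p q := ⟨by simp only [p]; linarith, by simp only [q]; linarith⟩
      refine hasDerivAt_of_tendstoLocallyUniformlyOn (g' := fun w => (y w) ^ 2 - (g w) ^ 2)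
        isOpen_Ioo hU2 ?_ (fun w hw => hy w (hp.trans hw.1)) hzm
      filter_upwards [eventually_ge_atTop N] with n h2 w hw
      exact (hYd n w (hin n h2 hw)).hasDerivAt
        (mem_of_superset (isOpen_Ioo.mem_nhds hw) (hin n h2))
  · intro z hz
    have hz0 : 0 < z := hz₂.trans_le hz
    refine le_of_tendsto (hy z hz0) ?_
    filter_upwards [hev z z hz0] with n hn using B1 n z ⟨hn.1.le, hn.2.1.le⟩ hz

open Filter Topology in
lemma ric_main (g : ℝ → ℝ) (hgc : ContinuousOn g (Ioi 0)) (hgpos : ∀ z ∈ Ioi (0:ℝ), 0 < g z)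
    (z₁ z₂ : ℝ) (hz₁ : 0 < z₁) (hz₂ : 0 < z₂)
    (hanti₁ : AntitoneOn g (Ioc 0 z₁)) (hanti₂ : AntitoneOn g (Ici z₂))
    (hlim : Tendsto g atTop (𝓝 0)) (hlim0 : Tendsto g (𝓝[>] 0) atTop)
    (hint : IntegrableOn g (Ioo 0 1)) :
    ∃ y : ℝ → ℝ,
      ((∀ z ∈ Ioi (0:ℝ), 0 ≤ y z ∧ HasDerivAt y ((y z) ^ 2 - (g z) ^ 2) z) ∧
        Filter.Tendsto y Filter.atTop (nhds 0)) ∧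
      (∀ z ∈ Ioi (0:ℝ), 0 < y z) ∧
      (∃ z₁ z₂ : ℝ, 0 < z₁ ∧ z₁ ≤ z₂ ∧
        ∀ z ∈ Ioc (0:ℝ) z₁ ∪ Ici z₂, y z ≤ g z) ∧
      IntegrableOn y (Ioo 0 1) volume ∧
      (∃ a : ℝ, 0 < a ∧ AntitoneOn y (Ioc 0 a)) ∧
      (∃ b₀ : ℝ, AntitoneOn y (Ici b₀)) ∧
      (∀ y' : ℝ → ℝ,
        ((∀ z ∈ Ioi (0:ℝ), 0 ≤ y' z ∧ HasDerivAt y' ((y' z) ^ 2 - (g z) ^ 2) z) ∧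
          Filter.Tendsto y' Filter.atTop (nhds 0)) →
        EqOn y' y (Ioi 0)) := by
  obtain ⟨y, hy, hle₂⟩ := ric_exists g hgc hgpos z₂ hz₂ hanti₂ hlim
  have hyc : ContinuousOn y (Ioi 0) := fun z hz => (hy z hz).2.continuousAt.continuousWithinAt
  have hylim : Tendsto y atTop (𝓝 0) := by
    refine squeeze_zero' ?_ ?_ hlim
    · filter_upwards [eventually_gt_atTop 0] with z hz using (hy z hz).1
    · filter_upwards [eventually_ge_atTop z₂] with z hz using hle₂ z hz
  have hpos : ∀ z ∈ Ioi (0:ℝ), 0 < y z := by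
    intro z hz
    refine lt_of_le_of_ne (hy z hz).1 fun h => ?_
    have hmin : IsLocalMin y z := by
      filter_upwards [Ioi_mem_nhds hz] with w hw
      rw [← h]
      exact (hy w hw).1
    have h1 := hmin.hasDerivAt_eq_zero (hy z hz).2
    have h2 := hgpos z hz
    rw [← h] at h1
    nlinarith
  -- behaviour near zero
  have hsmall : ∃ w, 0 < w ∧ w ≤ z₁ ∧ y w ≤ g w := by
    by_contra! hcon
    have hub : ∀ w ∈ Ioc 0 z₁, y w ≤ y z₁ := by
      intro w hw
      exact ric_fence g y w z₁ (hanti₁.mono fun v hv => ⟨hw.1.trans_le hv.1, hv.2⟩)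
        (fun v hv => (hgpos v (hw.1.trans_le hv.1)).le)
        (hyc.mono fun v hv => hw.1.trans_le hv.1)
        (fun v hv => (hy v (hw.1.trans_le hv.1)).2.hasDerivWithinAt) (hcon w hw.1 hw.2)
        z₁ ⟨hw.2, le_rfl⟩
    have h1 := (hlim0.eventually_gt_atTop (y z₁)).and (Ioc_mem_nhdsGT hz₁)
    obtain ⟨w, hw, hw'⟩ := h1.exists
    linarith [hub w hw', hcon w hw'.1 hw'.2]
  obtain ⟨w, hw0, hwz, hw⟩ := hsmall
  have hle₁ : ∀ z ∈ Ioc 0 w, y z ≤ g z := by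
    intro z hz
    by_contra! hlt
    have := ric_fence g y z w (hanti₁.mono fun v hv => ⟨hz.1.trans_le hv.1, hv.2.trans hwz⟩)
        (fun v hv => (hgpos v (hz.1.trans_le hv.1)).le)
        (hyc.mono fun v hv => hz.1.trans_le hv.1)
        (fun v hv => (hy v (hz.1.trans_le hv.1)).2.hasDerivWithinAt) hlt w ⟨hz.2, le_rfl⟩
    have h2 := hanti₁ ⟨hz.1, hz.2.trans hwz⟩ ⟨hw0, hwz⟩ hz.2
    linarith
  have hantigen : ∀ D : Set ℝ, Convex ℝ D → D ⊆ Ioi 0 → (∀ z ∈ D, y z ≤ g z) →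
      AntitoneOn y D := by
    intro D hD hD0 hDg
    refine antitoneOn_of_hasDerivWithinAt_nonpos hD (hyc.mono hD0)
      (fun z hz => (hy z (hD0 (interior_subset hz))).2.hasDerivWithinAt) ?_
    intro z hz
    have hz := interior_subset hz
    have h1 := hDg z hz
    have h2 := (hy z (hD0 hz)).1
    nlinarith
  refine ⟨y, ⟨hy, hylim⟩, hpos, ⟨w, max w z₂, hw0, le_max_left _ _, ?_⟩, ?_,
    ⟨w, hw0, hantigen _ (convex_Ioc _ _) (fun z hz => hz.1) hle₁⟩,
    ⟨z₂, hantigen _ (convex_Ici _) (fun z hz => hz₂.trans_le hz) hle₂⟩, ?_⟩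
  · rintro z (hz | hz)
    · exact hle₁ z hz
    · exact hle₂ z (mem_Ici.mpr ((le_max_right _ _).trans (mem_Ici.mp hz)))
  · have h1 : IntegrableOn y (Ioo 0 1 ∩ Ioc 0 w) := by
      refine Integrable.mono' (hint.mono_set inter_subset_left)
        ((hyc.mono fun z hz => hz.2.1).aestronglyMeasurable
          (measurableSet_Ioo.inter measurableSet_Ioc)) ?_
      refine (ae_restrict_iff' (measurableSet_Ioo.inter measurableSet_Ioc)).mpr ?_
      refine Eventually.of_forall fun z hz => ?_
      rw [Real.norm_of_nonneg (hy z hz.2.1).1]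
      exact hle₁ z hz.2
    have h2 : IntegrableOn y (Icc w 1) :=
      (hyc.mono fun z hz => hw0.trans_le hz.1).integrableOn_Icc
    refine (h1.union h2).mono_set fun z hz => ?_
    by_cases h : z ≤ w
    · exact Or.inl ⟨hz, hz.1, h⟩
    · exact Or.inr ⟨(not_le.mp h).le, hz.2.le⟩
  · rintro y' ⟨hy', hy'lim⟩ z hz
    have hd : Tendsto (fun v => |y' v - y v|) atTop (𝓝 0) := by
      simpa using (hy'lim.sub hylim).abs
    have h0 : |y' z - y z| ≤ 0 := by
      refine ge_of_tendsto hd ?_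
      filter_upwards [eventually_ge_atTop z] with v hv
      exact ric_diff g y' y z v hv
        (fun x hx => ⟨(hy' x (lt_of_lt_of_le hz hx.1)).1,
          (hy' x (lt_of_lt_of_le hz hx.1)).2.hasDerivWithinAt⟩)
        (fun x hx => ⟨(hy x (lt_of_lt_of_le hz hx.1)).1,
          (hy x (lt_of_lt_of_le hz hx.1)).2.hasDerivWithinAt⟩)
    have := abs_nonpos_iff.mp h0
    linarith

open Filter Topology in
lemma psi_lower (b γ c : ℝ) (μ : Measure ℝ) (hc : 0 < c)
    (hμ2 : ∫⁻ x in Ioi (0:ℝ), ENNReal.ofReal (min 1 (x ^ 2)) ∂μ < ⊤)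
    (ψ : ℝ → ℝ)
    (hψ : ∀ u, ψ u = -(b * u) + γ ^ 2 * u ^ 2 +
      ∫ x in Ioi (0:ℝ), (Real.exp (-(u * x)) - 1 + (if x < 1 then u * x else 0)) ∂μ) :
    ∃ δ : ℝ, 0 < δ ∧ ∀ u ∈ Ioc 0 δ, -(c / 2) ≤ ψ u := by
  have hint : Integrable (fun x : ℝ => min 1 (x ^ 2)) (μ.restrict (Ioi 0)) := by
    refine ⟨by fun_prop, ?_⟩
    rw [hasFiniteIntegral_iff_ofReal]
    · exact hμ2
    · exact Eventually.of_forall fun x => by positivity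
  have hT : Tendsto (fun u : ℝ => ∫ x in Ioi (0:ℝ),
      (Real.exp (-(u * x)) - 1 + (if x < 1 then u * x else 0)) ∂μ) (𝓝[>] 0)
      (𝓝 (∫ x in Ioi (0:ℝ), (0:ℝ) ∂μ)) := by
    refine tendsto_integral_filter_of_dominated_convergence (fun x : ℝ => min 1 (x ^ 2))
      ?_ ?_ hint ?_
    · refine Eventually.of_forall fun u => Measurable.aestronglyMeasurable ?_
      refine Measurable.add (by fun_prop) ?_
      exact Measurable.ite measurableSet_Iio (by fun_prop) (by fun_prop)
    · filter_upwards [Ioc_mem_nhdsGT (zero_lt_one (α := ℝ))] with u hu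
      refine (ae_restrict_iff' measurableSet_Ioi).mpr (Eventually.of_forall fun x hx => ?_)
      rw [mem_Ioi] at hx
      have hux : 0 ≤ u * x := mul_nonneg hu.1.le hx.le
      split_ifs with h
      · have h1 : u * x ≤ x := by nlinarith [hu.2]
        have h2 : |(-(u * x))| ≤ 1 := by
          rw [abs_neg, abs_of_nonneg hux]
          linarith
        have h3 := Real.abs_exp_sub_one_sub_id_le h2
        rw [Real.norm_eq_abs]
        have h4 : (-(u * x)) ^ 2 ≤ x ^ 2 := by
          rw [neg_sq]
          exact pow_le_pow_left₀ hux h1 2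
        have h5 : Real.exp (-(u * x)) - 1 + u * x = Real.exp (-(u * x)) - 1 - -(u * x) := by ring
        rw [h5]
        refine h3.trans (h4.trans (le_min ?_ le_rfl))
        nlinarith
      · have h1 : Real.exp (-(u * x)) ≤ 1 := Real.exp_le_one_iff.mpr (by linarith)
        have h2 := Real.exp_pos (-(u * x))
        rw [Real.norm_eq_abs, add_zero, min_eq_left (by nlinarith), abs_le]
        constructor <;> linarith
    · refine Eventually.of_forall fun x => ?_
      have : Continuous (fun u : ℝ => Real.exp (-(u * x)) - 1 + (if x < 1 then u * x else 0)) := by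
        split_ifs <;> fun_prop
      have h := this.tendsto 0
      have h0 : Real.exp (-(0 * x)) - 1 + (if x < 1 then 0 * x else 0) = 0 := by simp
      rw [h0] at h
      exact h.mono_left nhdsWithin_le_nhds
  have hT2 : Tendsto (fun u : ℝ => -(b * u) + γ ^ 2 * u ^ 2) (𝓝[>] 0) (𝓝 0) := by
    have : Continuous (fun u : ℝ => -(b * u) + γ ^ 2 * u ^ 2) := by fun_prop
    have h := this.tendsto 0
    simp only [mul_zero, neg_zero, ne_eq, OfNat.ofNat_ne_zero, not_false_eq_true, zero_pow,
      add_zero] at h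
    exact h.mono_left nhdsWithin_le_nhds
  have hT3 := hT2.add hT
  rw [integral_zero, add_zero] at hT3
  have hev := hT3.eventually (lt_mem_nhds (show -(c/2) < 0 by linarith))
  obtain ⟨δ, hδ, h⟩ := mem_nhdsGT_iff_exists_Ioc_subset.mp hev
  refine ⟨δ, hδ, fun u hu => ?_⟩
  rw [hψ]
  exact (h hu).le

/-- monotonicity of `m + log/2` where `ψ ≥ -c/2`. -/
lemma m_mono (c σ : ℝ) (hc : 0 < c) (ψ ω m : ℝ → ℝ)
    (hω : ∀ z, ω z = c * z + σ ^ 2 * z ^ 2 / 2)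
    (hm_int : ∀ lam, 0 ≤ lam → IntervalIntegrable (fun u => ψ u / ω u) volume 0 lam)
    (hm : ∀ lam, m lam = ∫ u in (0:ℝ)..lam, ψ u / ω u)
    (x₁ x₂ : ℝ) (h1 : 0 < x₁) (h12 : x₁ ≤ x₂) (hψ : ∀ u ∈ Icc x₁ x₂, -(c / 2) ≤ ψ u) :
    m x₁ + Real.log x₁ / 2 ≤ m x₂ + Real.log x₂ / 2 := by
  have h2 : 0 < x₂ := h1.trans_le h12
  have hi : IntervalIntegrable (fun u => ψ u / ω u) volume x₁ x₂ :=
    (hm_int x₁ h1.le).symm.trans (hm_int x₂ h2.le)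
  have hd : m x₂ - m x₁ = ∫ u in x₁..x₂, ψ u / ω u := by
    rw [hm, hm, intervalIntegral.integral_interval_sub_left (hm_int x₂ h2.le) (hm_int x₁ h1.le)]
  have hlog : ∫ u in x₁..x₂, (-(1/2)) * u⁻¹ = -(1/2) * (Real.log x₂ - Real.log x₁) := by
    rw [intervalIntegral.integral_const_mul, integral_inv_of_pos h1 h2, Real.log_div h2.ne' h1.ne']
  have hle : ∫ u in x₁..x₂, (-(1/2)) * u⁻¹ ≤ ∫ u in x₁..x₂, ψ u / ω u := by
    refine intervalIntegral.integral_mono_on h12 ?_ hi ?_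
    · refine ContinuousOn.intervalIntegrable ?_
      rw [uIcc_of_le h12]
      exact continuousOn_const.mul (continuousOn_inv₀.mono fun u hu => (h1.trans_le hu.1).ne')
    · intro u hu
      have hu0 : 0 < u := h1.trans_le hu.1
      have h3 := hψ u hu
      have hω0 : 0 < ω u := by rw [hω]; positivity
      rw [le_div_iff₀ hω0]
      have h4 : -(1/2) * u⁻¹ * ω u = -(c/2) - σ^2 * u / 4 := by
        rw [hω]
        field_simp
        ring
      rw [h4]
      have : 0 ≤ σ ^ 2 * u / 4 := by positivity
      linarith
  linarith

open Filter Topology in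
theorem stmt_13
    (b γ c σ : ℝ) (μ : Measure ℝ)
    (hγ : 0 ≤ γ) (hc : 0 < c) (hσ : 0 ≤ σ)
    (hμ0 : μ (Iic 0) = 0)
    (hμ2 : ∫⁻ x in Ioi (0:ℝ), ENNReal.ofReal (min 1 (x ^ 2)) ∂μ < ⊤)
    (hμlog : ∫⁻ x in Ioi (1:ℝ), ENNReal.ofReal (Real.log x) ∂μ < ⊤)
    (ψ ω m I Iinv r : ℝ → ℝ)
    (hψ : ∀ u, ψ u = -(b * u) + γ ^ 2 * u ^ 2 +
      ∫ x in Ioi (0:ℝ), (Real.exp (-(u * x)) - 1 + (if x < 1 then u * x else 0)) ∂μ)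
    (hgen : ∃ ϑ : ℝ, 0 ≤ ϑ ∧ ∀ z, ϑ ≤ z → 0 < ψ z)
    (hω : ∀ z, ω z = c * z + σ ^ 2 * z ^ 2 / 2)
    (hm_int : ∀ lam, 0 ≤ lam → IntervalIntegrable (fun u => ψ u / ω u) volume 0 lam)
    (hm : ∀ lam, m lam = ∫ u in (0:ℝ)..lam, ψ u / ω u)
    (hI : ∀ lam, I lam = ∫ u in (0:ℝ)..lam, Real.exp (m u))
    (hIinv_left : ∀ x, 0 ≤ x → Iinv (I x) = x)
    (hIinv_right : ∀ z, 0 ≤ z → I (Iinv z) = z)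
    (hr : ∀ z, r z = Real.exp (-(m (Iinv z))) / Real.sqrt (ω (Iinv z)))
    (lam : ℝ) (hlam : 0 < lam) :
    ∃ y : ℝ → ℝ,
      ((∀ z ∈ Ioi (0:ℝ), 0 ≤ y z ∧ HasDerivAt y ((y z) ^ 2 - lam * (r z) ^ 2) z) ∧
        Filter.Tendsto y Filter.atTop (nhds 0)) ∧
      (∀ z ∈ Ioi (0:ℝ), 0 < y z) ∧
      (∃ z₁ z₂ : ℝ, 0 < z₁ ∧ z₁ ≤ z₂ ∧
        ∀ z ∈ Ioc (0:ℝ) z₁ ∪ Ici z₂, y z ≤ Real.sqrt lam * r z) ∧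
      IntegrableOn y (Ioo 0 1) volume ∧
      (∃ a : ℝ, 0 < a ∧ AntitoneOn y (Ioc 0 a)) ∧
      (∃ b₀ : ℝ, AntitoneOn y (Ici b₀)) ∧
      (∀ y' : ℝ → ℝ,
        ((∀ z ∈ Ioi (0:ℝ), 0 ≤ y' z ∧ HasDerivAt y' ((y' z) ^ 2 - lam * (r z) ^ 2) z) ∧
          Filter.Tendsto y' Filter.atTop (nhds 0)) →
        EqOn y' y (Ioi 0)) := by
  obtain ⟨δ, hδ, hψδ⟩ := psi_lower b γ c μ hc hμ2 ψ hψ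
  obtain ⟨ϑ, hϑ0, hϑ⟩ := hgen
  have hm0 : m 0 = 0 := by rw [hm, intervalIntegral.integral_same]
  -- continuity of m
  have hmc : ContinuousOn m (Ici 0) := by
    intro x hx
    have hx : (0:ℝ) ≤ x := hx
    have h := intervalIntegral.continuousOn_primitive_interval' (hm_int (x + 1) (by linarith))
      (left_mem_uIcc)
    have h' : ContinuousOn m (Icc 0 (x + 1)) := by
      rw [uIcc_of_le (by linarith)] at h
      exact h.congr fun u _ => hm u
    refine (h' x ⟨hx, by linarith⟩).mono_of_mem_nhdsWithin ?_
    rw [← Ici_inter_Iic]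
    exact inter_mem self_mem_nhdsWithin
      (mem_nhdsWithin_of_mem_nhds (Iic_mem_nhds (by linarith)))
  -- extended version of I
  set mt : ℝ → ℝ := fun u => m (max u 0) with hmt
  have hmtc : Continuous mt := by
    have : Continuous (fun u : ℝ => max u 0) := by fun_prop
    exact hmc.comp_continuous this fun u => mem_Ici.mpr (le_max_right _ _)
  have hec : Continuous (fun u => Real.exp (mt u)) := Real.continuous_exp.comp hmtc
  set It : ℝ → ℝ := fun x => ∫ u in (0:ℝ)..x, Real.exp (mt u) with hIt
  have hItd : ∀ x, HasDerivAt It (Real.exp (mt x)) x := fun x =>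
    intervalIntegral.integral_hasDerivAt_right (hec.intervalIntegrable _ _)
      hec.stronglyMeasurable.stronglyMeasurableAtFilter hec.continuousAt
  have hItmono : StrictMono It := strictMono_of_hasDerivAt_pos hItd fun x => Real.exp_pos _
  have hIIt : ∀ x, 0 ≤ x → I x = It x := by
    intro x hx
    rw [hI]
    refine intervalIntegral.integral_congr fun u hu => ?_
    rw [uIcc_of_le hx] at hu
    simp only [hmt, max_eq_left hu.1]
  have hI0 : I 0 = 0 := by rw [hI, intervalIntegral.integral_same]
  have hφ0 : Iinv 0 = 0 := by
    have := hIinv_left 0 le_rfl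
    rwa [hI0] at this
  have hφpos : ∀ z, 0 < z → 0 < Iinv z := by
    intro z hz
    by_contra! hle
    have h1 := hIinv_right z hz.le
    rw [hI, intervalIntegral.integral_symm] at h1
    have : 0 ≤ ∫ u in (Iinv z)..0, Real.exp (m u) :=
      intervalIntegral.integral_nonneg hle fun u _ => (Real.exp_pos _).le
    linarith
  have hφnn : ∀ z, 0 ≤ z → 0 ≤ Iinv z := by
    intro z hz
    rcases hz.eq_or_lt with h | h
    · rw [← h, hφ0]
    · exact (hφpos z h).le
  have hItφ : ∀ z, 0 ≤ z → It (Iinv z) = z := fun z hz => by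
    rw [← hIIt _ (hφnn z hz), hIinv_right z hz]
  have hφmono : ∀ z w, 0 ≤ z → z ≤ w → Iinv z ≤ Iinv w := by
    intro z w hz hzw
    rw [← hItmono.le_iff_le, hItφ z hz, hItφ w (hz.trans hzw)]
    exact hzw
  have hφle : ∀ z x, 0 ≤ z → 0 ≤ x → z ≤ I x → Iinv z ≤ x := by
    intro z x hz hx h
    rw [← hItmono.le_iff_le, hItφ z hz, ← hIIt x hx]
    exact h
  have hφge : ∀ z x, 0 ≤ z → 0 ≤ x → I x ≤ z → x ≤ Iinv z := by
    intro z x hz hx h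
    rw [← hItmono.le_iff_le, hItφ z hz, ← hIIt x hx]
    exact h
  have hInn : ∀ x, 0 ≤ x → 0 ≤ I x := by
    intro x hx
    rw [hI]
    exact intervalIntegral.integral_nonneg hx fun u _ => (Real.exp_pos _).le
  have hIpos : ∀ x, 0 < x → 0 < I x := by
    intro x hx
    rw [hIIt x hx.le, ← hI0, hIIt 0 le_rfl]
    exact hItmono hx
  -- continuity of φ
  have hφc : ContinuousOn Iinv (Ici 0) := by
    set φt : ℝ → ℝ := fun z => if z < 0 then z else Iinv z with hφt
    have hmono : Monotone φt := by
      intro z w hzw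
      simp only [hφt]
      split_ifs with h1 h2 h2
      · exact hzw
      · exact h1.le.trans (hφnn w (not_lt.mp h2))
      · linarith
      · exact hφmono z w (not_lt.mp h1) hzw
    have hsurj : Function.Surjective φt := by
      intro w
      by_cases hw : w < 0
      · exact ⟨w, by simp [hφt, hw]⟩
      · have hw := not_lt.mp hw
        refine ⟨I w, ?_⟩
        simp only [hφt, not_lt.mpr (hInn w hw), if_false]
        exact hIinv_left w hw
    refine (hmono.continuous_of_surjective hsurj).continuousOn.congr fun z hz => ?_
    simp only [hφt, not_lt.mpr (mem_Ici.mp hz), if_false]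
  have hφca : ∀ z, 0 < z → ContinuousAt Iinv z := fun z hz =>
    hφc.continuousAt (Ici_mem_nhds hz)
  have hφd : ∀ z, 0 < z → HasDerivAt Iinv (Real.exp (-(m (Iinv z)))) z := by
    intro z hz
    have h1 := HasDerivAt.of_local_left_inverse (hφca z hz) (hItd (Iinv z)) (Real.exp_pos _).ne' (by
      filter_upwards [Ioi_mem_nhds hz] with w hw using hItφ w (le_of_lt hw))
    rw [← Real.exp_neg] at h1
    simpa only [hmt, max_eq_left (hφpos z hz).le] using h1
  -- the function h
  set k : ℝ → ℝ := fun x => m x + Real.log x / 2 with hk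
  set h : ℝ → ℝ := fun x => Real.exp (-(k x)) / Real.sqrt (c + σ ^ 2 * x / 2) with hh
  have hrh : ∀ z, 0 < z → r z = h (Iinv z) := by
    intro z hz
    have hx := hφpos z hz
    rw [hr, hω]
    simp only [hh, hk]
    have e1 : c * Iinv z + σ ^ 2 * Iinv z ^ 2 / 2 = Iinv z * (c + σ ^ 2 * Iinv z / 2) := by ring
    have e2 : Real.sqrt (Iinv z) = Real.exp (Real.log (Iinv z) / 2) := by
      rw [Real.exp_half, Real.exp_log hx]
    rw [e1, Real.sqrt_mul hx.le, e2, neg_add, Real.exp_add, Real.exp_neg (Real.log (Iinv z) / 2)]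
    field_simp
  have hden : ∀ x, 0 ≤ x → 0 < c + σ ^ 2 * x / 2 := fun x hx => by positivity
  have hhpos : ∀ x, 0 < x → 0 < h x := fun x hx =>
    div_pos (Real.exp_pos _) (Real.sqrt_pos.mpr (hden x hx.le))
  have hhc : ContinuousOn h (Ioi 0) := by
    have hkc : ContinuousOn k (Ioi 0) := (hmc.mono Ioi_subset_Ici_self).add
      ((Real.continuousOn_log.mono fun x hx => (ne_of_gt hx)).div_const 2)
    refine (Real.continuous_exp.comp_continuousOn hkc.neg).div ?_ ?_
    · exact (Real.continuous_sqrt.comp (by fun_prop)).continuousOn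
    · intro x hx
      exact (Real.sqrt_pos.mpr (hden x (le_of_lt hx))).ne'
  have hhanti : ∀ x₁ x₂, 0 < x₁ → x₁ ≤ x₂ → (∀ u ∈ Icc x₁ x₂, -(c / 2) ≤ ψ u) → h x₂ ≤ h x₁ := by
    intro x₁ x₂ h1 h12 hu
    have h3 : k x₁ ≤ k x₂ := m_mono c σ hc ψ ω m hω hm_int hm x₁ x₂ h1 h12 hu
    simp only [hh]
    have h4 : Real.exp (-k x₂) ≤ Real.exp (-k x₁) := Real.exp_le_exp.mpr (by linarith)
    have h5 : Real.sqrt (c + σ ^ 2 * x₁ / 2) ≤ Real.sqrt (c + σ ^ 2 * x₂ / 2) :=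
      Real.sqrt_le_sqrt (by gcongr)
    exact div_le_div₀ (Real.exp_pos _).le h4 (Real.sqrt_pos.mpr (hden x₁ h1.le)) h5
  -- limits of h
  have hh0 : Tendsto h (𝓝[>] 0) atTop := by
    have hk0 : Tendsto (fun x => -(k x)) (𝓝[>] 0) atTop := by
      rw [tendsto_neg_atTop_iff]
      have h1 : Tendsto m (𝓝[>] 0) (𝓝 (m 0)) :=
        (hmc 0 self_mem_Ici).mono_left (nhdsWithin_mono _ Ioi_subset_Ici_self)
      exact h1.add_atBot (Real.tendsto_log_nhdsGT_zero.atBot_div_const (by norm_num))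
    have h2 : Tendsto (fun x : ℝ => (Real.sqrt (c + σ ^ 2 * x / 2))⁻¹) (𝓝[>] 0)
        (𝓝 (Real.sqrt (c + σ ^ 2 * 0 / 2))⁻¹) := by
      have : Continuous fun x : ℝ => Real.sqrt (c + σ ^ 2 * x / 2) :=
        Real.continuous_sqrt.comp (by fun_prop)
      refine ((this.tendsto 0).inv₀ ?_).mono_left nhdsWithin_le_nhds
      exact (Real.sqrt_pos.mpr (hden 0 le_rfl)).ne'
    exact (Real.tendsto_exp_atTop.comp hk0).atTop_mul_pos
      (inv_pos.mpr (Real.sqrt_pos.mpr (hden 0 le_rfl))) h2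
  set T : ℝ := ϑ + 1 with hT
  have hT0 : 0 < T := by linarith
  have hhinf : Tendsto h atTop (𝓝 0) := by
    have hmT : ∀ x, T ≤ x → m T ≤ m x := by
      intro x hx
      have hx0 : 0 ≤ x := hT0.le.trans hx
      have hd : m x - m T = ∫ u in T..x, ψ u / ω u := by
        rw [hm, hm, intervalIntegral.integral_interval_sub_left (hm_int x hx0) (hm_int T hT0.le)]
      have : 0 ≤ ∫ u in T..x, ψ u / ω u := by
        refine intervalIntegral.integral_nonneg hx fun u hu => ?_
        have hu0 : 0 < u := hT0.trans_le hu.1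
        refine div_nonneg (hϑ u (by linarith [hu.1])).le ?_
        rw [hω]
        positivity
      linarith
    have hkinf : Tendsto k atTop atTop := by
      have h1 : Tendsto (fun x => m T + Real.log x / 2) atTop atTop :=
        tendsto_atTop_add_const_left _ _ (Real.tendsto_log_atTop.atTop_div_const (by norm_num))
      refine tendsto_atTop_mono' _ ?_ h1
      filter_upwards [eventually_ge_atTop T] with x hx
      simp only [hk]
      linarith [hmT x hx]
    have h2 : Tendsto (fun x => Real.exp (-(k x)) / Real.sqrt c) atTop (𝓝 0) := by
      have := (Real.tendsto_exp_neg_atTop_nhds_zero.comp hkinf).div_const (Real.sqrt c)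
      rwa [zero_div] at this
    refine squeeze_zero' ?_ ?_ h2
    · filter_upwards [eventually_gt_atTop 0] with x hx using (hhpos x hx).le
    · filter_upwards [eventually_gt_atTop 0] with x hx
      simp only [hh]
      have : Real.sqrt c ≤ Real.sqrt (c + σ ^ 2 * x / 2) := Real.sqrt_le_sqrt (by
        have : 0 ≤ σ ^ 2 * x / 2 := by positivity
        linarith)
      exact div_le_div_of_nonneg_left (Real.exp_pos _).le (Real.sqrt_pos.mpr hc) this
  -- limits of φ
  have hφinf : Tendsto Iinv atTop atTop := by
    rw [tendsto_atTop]
    intro x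
    filter_upwards [eventually_ge_atTop (I (max x 0))] with z hz
    have h0 : 0 ≤ max x 0 := le_max_right _ _
    exact (le_max_left _ _).trans (hφge z _ ((hInn _ h0).trans hz) h0 hz)
  have hφlim0 : Tendsto Iinv (𝓝[>] 0) (𝓝[>] 0) := by
    refine tendsto_nhdsWithin_iff.mpr ⟨?_, ?_⟩
    · have := (hφc 0 self_mem_Ici).mono_left (nhdsWithin_mono _ Ioi_subset_Ici_self)
      rwa [hφ0] at this
    · filter_upwards [self_mem_nhdsWithin] with z hz using hφpos z hz
  have hrc : ContinuousOn r (Ioi 0) := by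
    have : ContinuousOn (fun z => h (Iinv z)) (Ioi 0) :=
      hhc.comp (hφc.mono Ioi_subset_Ici_self) fun z hz => hφpos z hz
    exact this.congr fun z hz => hrh z hz
  have hrpos : ∀ z, 0 < z → 0 < r z := fun z hz => by
    rw [hrh z hz]; exact hhpos _ (hφpos z hz)
  have hsl : 0 < Real.sqrt lam := Real.sqrt_pos.mpr hlam
  have hrint : IntegrableOn r (Ioo 0 1) := by
    have hG : IntegrableOn (fun z => 2 / Real.sqrt c *
        (Real.exp (-(m (Iinv z))) / (2 * Real.sqrt (Iinv z)))) (Ioc 0 1) := by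
      refine intervalIntegral.integrableOn_deriv_of_nonneg
        (g := fun z => 2 / Real.sqrt c * Real.sqrt (Iinv z)) ?_ ?_ ?_
      · exact continuousOn_const.mul
          (Real.continuous_sqrt.comp_continuousOn (hφc.mono Icc_subset_Ici_self))
      · intro z hz
        exact ((hφd z hz.1).sqrt (hφpos z hz.1).ne').const_mul _
      · intro z hz
        positivity
    refine Integrable.mono' (hG.mono_set Ioo_subset_Ioc_self)
      ((hrc.mono fun z hz => hz.1).aestronglyMeasurable measurableSet_Ioo) ?_
    refine (ae_restrict_iff' measurableSet_Ioo).mpr (Eventually.of_forall fun z hz => ?_)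
    rw [Real.norm_of_nonneg (hrpos z hz.1).le, hr]
    have hx := hφpos z hz.1
    have e : 2 / Real.sqrt c * (Real.exp (-(m (Iinv z))) / (2 * Real.sqrt (Iinv z)))
        = Real.exp (-(m (Iinv z))) / Real.sqrt (c * Iinv z) := by
      rw [Real.sqrt_mul hc.le]
      field_simp
    rw [e]
    refine div_le_div_of_nonneg_left (Real.exp_pos _).le (Real.sqrt_pos.mpr (by positivity))
      (Real.sqrt_le_sqrt ?_)
    rw [hω]
    have : 0 ≤ σ ^ 2 * Iinv z ^ 2 / 2 := by positivity
    linarith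
  have hmain := ric_main (fun z => Real.sqrt lam * r z) (continuousOn_const.mul hrc)
    (fun z hz => mul_pos hsl (hrpos z hz)) (I δ) (I T) (hIpos δ hδ) (hIpos T hT0) (by
      intro z hz w hw hzw
      refine mul_le_mul_of_nonneg_left ?_ hsl.le
      rw [hrh z hz.1, hrh w hw.1]
      refine hhanti _ _ (hφpos z hz.1) (hφmono z w hz.1.le hzw) fun u hu => hψδ u ⟨?_, ?_⟩
      · exact (hφpos z hz.1).trans_le hu.1
      · exact hu.2.trans (hφle w δ hw.1.le hδ.le hw.2)) (by
      intro z hz w hw hzw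
      have hz0 : 0 < z := (hIpos T hT0).trans_le hz
      have hw0 : 0 < w := (hIpos T hT0).trans_le hw
      refine mul_le_mul_of_nonneg_left ?_ hsl.le
      rw [hrh z hz0, hrh w hw0]
      refine hhanti _ _ (hφpos z hz0) (hφmono z w hz0.le hzw) fun u hu => ?_
      have h1 : T ≤ u := (hφge z T hz0.le hT0.le hz).trans hu.1
      have := hϑ u (by linarith)
      linarith) (by
      have h1 : Tendsto (fun z => Real.sqrt lam * h (Iinv z)) atTop (𝓝 (Real.sqrt lam * 0)) :=
        (hhinf.comp hφinf).const_mul _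
      rw [mul_zero] at h1
      refine h1.congr' ?_
      filter_upwards [eventually_gt_atTop 0] with z hz
      rw [hrh z hz]) (by
      have h1 : Tendsto (fun z => Real.sqrt lam * h (Iinv z)) (𝓝[>] 0) atTop :=
        (hh0.comp hφlim0).const_mul_atTop hsl
      refine h1.congr' ?_
      filter_upwards [self_mem_nhdsWithin] with z hz
      rw [hrh z hz]) (hrint.const_mul _)
  have e : ∀ z, (Real.sqrt lam * r z) ^ 2 = lam * r z ^ 2 := fun z => by
    rw [mul_pow, Real.sq_sqrt hlam.le]
  simpa only [e] using hmain
end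

section
/- Fix λ > 0 and let y : (0,∞) → [0,∞) be a C¹ function with y′(z) = y(z)² − λ r(z)² for all z > 0, y(z) → 0 as z → ∞, y integrable on (0,1), and y(z) ≤ √λ · r(z) for all z outside a compact subset of (0,∞). Define Φ(z) := (e^{−m(z)}/ω(z)) · exp{ −∫_0^{I(z)} y(v) dv } · ∫_0^z exp{ m(u) + 2∫_0^{I(u)} y(v) dv } du and h(x) := 1 + λ ∫_0^∞ e^{−xz} Φ(z) dz. Then for every x > 0: (bx − cx²) h′(x) + (γ²x + (σ²/2)x²) h″(x) + x ∫_{(0,∞)} ( h(x+z) − h(x) − z h′(x)·1_{z<1} ) μ(dz) = λ h(x). Equivalently, ∫_0^∞ ( xψ(z) + x²ω(z) − λ ) Φ(z) e^{−zx} dz = 1 for every x > 0. -/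
open MeasureTheory Set

lemma aux_kernel (u v : ℝ) (hu : 0 ≤ u) (hv : 0 < v) :
    |Real.exp (-(u * v)) - 1 + (if v < 1 then u * v else 0)| ≤ (u + u ^ 2) * min v (v ^ 2) := by
  have huv : 0 ≤ u * v := by positivity
  have h1 := Real.add_one_le_exp (-(u * v))
  split_ifs with h
  · have hmin : min v (v ^ 2) = v ^ 2 := min_eq_right (by nlinarith)
    rw [hmin, abs_of_nonneg (by linarith)]
    have h3 : Real.exp (-(u * v)) * (1 + u * v) ≤ 1 := by
      have := Real.add_one_le_exp (u * v)
      calc _ ≤ Real.exp (-(u * v)) * Real.exp (u * v) := by gcongr; linarith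
        _ = 1 := by rw [← Real.exp_add]; simp
    have : Real.exp (-(u * v)) ≤ 1 := by simpa using huv
    have h4 : Real.exp (-(u * v)) ≤ 1 - u * v + (u * v) ^ 2 := by
      by_contra hcon
      push Not at hcon
      nlinarith [mul_lt_mul_of_pos_right hcon (show 0 < 1 + u * v by linarith), pow_nonneg huv 3]
    nlinarith [mul_nonneg hu (sq_nonneg v)]
  · have hmin : min v (v ^ 2) = v := min_eq_left (by nlinarith)
    have : Real.exp (-(u * v)) ≤ 1 := by simpa using huv
    rw [hmin, abs_of_nonpos (by linarith)]
    nlinarith [mul_nonneg (sq_nonneg u) hv.le]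

lemma aux_min (μ : Measure ℝ)
    (hμ2 : ∫⁻ x in Ioi (0:ℝ), ENNReal.ofReal (min x (x ^ 2)) ∂μ < ⊤) :
    Integrable (fun x => min x (x ^ 2)) (μ.restrict (Ioi (0:ℝ))) := by
  refine ⟨by fun_prop, ?_⟩
  rw [hasFiniteIntegral_iff_ofReal]
  · exact hμ2
  · filter_upwards [ae_restrict_mem measurableSet_Ioi] with x hx
    have : (0:ℝ) < x := hx
    positivity

lemma aux_sfin (μ : Measure ℝ)
    (hμ2 : ∫⁻ x in Ioi (0:ℝ), ENNReal.ofReal (min x (x ^ 2)) ∂μ < ⊤) :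
    SFinite (μ.restrict (Ioi (0:ℝ))) := by
  have h := aux_min μ hμ2
  set ν := μ.restrict (Ioi (0:ℝ)) with hν
  have hm : Measurable (fun x : ℝ => ENNReal.ofReal (min x (x ^ 2))) := by fun_prop
  have hfin : IsFiniteMeasure (ν.withDensity (fun x => ENNReal.ofReal (min x (x ^ 2)))) :=
    isFiniteMeasure_withDensity hμ2.ne
  have := withDensity_inv_same (μ := ν) hm (by
    filter_upwards [ae_restrict_mem measurableSet_Ioi] with x hx
    have : (0:ℝ) < x := hx
    simp [this, this.ne']) (by filter_upwards with x; simp)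
  rw [← this]
  infer_instance

lemma aux_kmeas (u : ℝ) : Measurable fun v : ℝ =>
    Real.exp (-(u * v)) - 1 + (if v < 1 then u * v else 0) := by
  have : Measurable fun v : ℝ => (if v < 1 then u * v else 0) :=
    Measurable.ite measurableSet_Iio (by fun_prop) (by fun_prop)
  fun_prop

lemma aux_psi (b γ : ℝ) (μ : Measure ℝ)
    (hμ2 : ∫⁻ x in Ioi (0:ℝ), ENNReal.ofReal (min x (x ^ 2)) ∂μ < ⊤)
    (ψ : ℝ → ℝ)
    (hψ : ∀ u, ψ u = -(b * u) + γ ^ 2 * u ^ 2 +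
      ∫ x in Ioi (0:ℝ), (Real.exp (-(u * x)) - 1 + (if x < 1 then u * x else 0)) ∂μ) :
    ContinuousOn ψ (Ioi 0) ∧ ∃ K, 0 ≤ K ∧ ∀ u, 0 < u → |ψ u| ≤ K * (u + u ^ 2) := by
  have hIntg := aux_min μ hμ2
  constructor
  · have : ContinuousOn (fun u => ∫ x in Ioi (0:ℝ),
        (Real.exp (-(u * x)) - 1 + (if x < 1 then u * x else 0)) ∂μ) (Ioi 0) := by
      intro u₀ hu₀
      refine (continuousAt_of_dominated (bound := fun x => ((u₀+1) + (u₀+1) ^ 2) * min x (x ^ 2))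
        ?_ ?_ ?_ ?_).continuousWithinAt
      · filter_upwards with u using (aux_kmeas u).aestronglyMeasurable
      · filter_upwards [Ioo_mem_nhds (show (0:ℝ) < u₀ from hu₀) (lt_add_one u₀)] with u hu
        filter_upwards [ae_restrict_mem measurableSet_Ioi] with x hx
        have hx' : (0:ℝ) < x := hx
        have := hu.1
        refine (aux_kernel u x hu.1.le hx).trans ?_
        have := hu.2.le
        have h3 : (0:ℝ) ≤ min x (x ^ 2) := by positivity
        gcongr
      · exact hIntg.const_mul _
      · filter_upwards with x
        by_cases h : x < 1
        · simp only [h, if_true]; fun_prop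
        · simp only [h, if_false]; fun_prop
    rw [show ψ = _ from funext hψ]
    fun_prop
  · set M := ∫ x in Ioi (0:ℝ), min x (x ^ 2) ∂μ
    have hM : 0 ≤ M := setIntegral_nonneg measurableSet_Ioi (fun x hx => by
      have : (0:ℝ) < x := hx
      positivity)
    refine ⟨|b| + γ ^ 2 + M, by positivity, fun u hu => ?_⟩
    have h1 : |∫ x in Ioi (0:ℝ), (Real.exp (-(u * x)) - 1 + (if x < 1 then u * x else 0)) ∂μ|
        ≤ (u + u ^ 2) * M := by
      rw [← integral_const_mul]
      rw [← Real.norm_eq_abs]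
      refine norm_integral_le_of_norm_le (hIntg.const_mul _) ?_
      filter_upwards [ae_restrict_mem measurableSet_Ioi] with x hx
      exact aux_kernel u x hu.le hx
    rw [hψ]
    have h2 := abs_add_le (-(b * u) + γ ^ 2 * u ^ 2) (∫ x in Ioi (0:ℝ), (Real.exp (-(u * x)) - 1 + (if x < 1 then u * x else 0)) ∂μ)
    have h3 := abs_add_le (-(b * u)) (γ ^ 2 * u ^ 2)
    rw [abs_neg, abs_mul, abs_of_pos hu, abs_of_nonneg (by positivity : 0 ≤ γ ^ 2 * u ^ 2)] at h3
    nlinarith [mul_nonneg (abs_nonneg b) (sq_nonneg u), mul_nonneg (sq_nonneg γ) hu.le]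

/-- Laplace transforms -/
lemma aux_lap_int (g : ℝ → ℝ) (hg : ContinuousOn g (Ioi 0))
    (hb : ∀ ε, 0 < ε → ∃ C, ∀ z, 0 < z → |g z| ≤ C * Real.exp (ε * z)) (x : ℝ) (hx : 0 < x) :
    IntegrableOn (fun z => Real.exp (-(x * z)) * g z) (Ioi 0) := by
  obtain ⟨C, hC⟩ := hb (x / 2) (by positivity)
  have h1 : IntegrableOn (fun z => C * Real.exp (-(x/2) * z)) (Ioi 0) :=
    (exp_neg_integrableOn_Ioi 0 (by positivity)).const_mul C
  refine Integrable.mono' h1 ?_ ?_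
  · exact ContinuousOn.aestronglyMeasurable (by fun_prop) measurableSet_Ioi
  · filter_upwards [ae_restrict_mem measurableSet_Ioi] with z hz
    rw [norm_mul, Real.norm_eq_abs, Real.abs_exp, Real.norm_eq_abs]
    calc _ ≤ Real.exp (-(x * z)) * (C * Real.exp (x / 2 * z)) := by gcongr; exact hC z hz
      _ = C * (Real.exp (-(x * z)) * Real.exp (x / 2 * z)) := by ring
      _ = _ := by rw [← Real.exp_add]; ring_nf

lemma aux_lap_mul (g : ℝ → ℝ) 
    (hb : ∀ ε, 0 < ε → ∃ C, ∀ z, 0 < z → |g z| ≤ C * Real.exp (ε * z)) :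
    ∀ ε, 0 < ε → ∃ C, ∀ z, 0 < z → |z * g z| ≤ C * Real.exp (ε * z) := by
  intro ε hε
  obtain ⟨C, hC⟩ := hb (ε / 2) (by positivity)
  refine ⟨(2 / ε) * C, fun z hz => ?_⟩
  rw [abs_mul, abs_of_pos hz]
  have h1 : z ≤ 2 / ε * Real.exp (ε / 2 * z) := by
    have := Real.add_one_le_exp (ε / 2 * z)
    calc z = 2 / ε * (ε / 2 * z) := by field_simp
      _ ≤ _ := by gcongr; linarith
  calc z * |g z| ≤ (2 / ε * Real.exp (ε / 2 * z)) * (C * Real.exp (ε / 2 * z)) := by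
        gcongr; exact hC z hz
    _ = 2 / ε * C * (Real.exp (ε / 2 * z) * Real.exp (ε / 2 * z)) := by ring
    _ = _ := by rw [← Real.exp_add]; ring_nf

lemma aux_lap_deriv (g : ℝ → ℝ) (hg : ContinuousOn g (Ioi 0))
    (hb : ∀ ε, 0 < ε → ∃ C, ∀ z, 0 < z → |g z| ≤ C * Real.exp (ε * z)) (x : ℝ) (hx : 0 < x) :
    HasDerivAt (fun x => ∫ z in Ioi (0:ℝ), Real.exp (-(x * z)) * g z)
      (-∫ z in Ioi (0:ℝ), Real.exp (-(x * z)) * (z * g z)) x := by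
  have hg2 : ContinuousOn (fun z => z * g z) (Ioi 0) := by fun_prop
  have hb2 := aux_lap_mul g hb
  rw [← integral_neg]
  refine (hasDerivAt_integral_of_dominated_loc_of_deriv_le
    (F' := fun x z => -(Real.exp (-(x * z)) * (z * g z)))
    (bound := fun z => ‖Real.exp (-(x / 2 * z)) * (z * g z)‖) (s := Ioi (x / 2))
    (Ioi_mem_nhds (by linarith)) ?_ ?_ ?_ ?_ ?_ ?_).2
  · filter_upwards with t
    exact ContinuousOn.aestronglyMeasurable (by fun_prop) measurableSet_Ioi
  · exact aux_lap_int g hg hb x hx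
  · exact ContinuousOn.aestronglyMeasurable (by fun_prop) measurableSet_Ioi
  · filter_upwards [ae_restrict_mem measurableSet_Ioi] with z hz t ht
    have hz' : (0:ℝ) < z := hz
    have ht' : x / 2 < t := ht
    rw [norm_neg, norm_mul, norm_mul (Real.exp (-(x / 2 * z)))]
    simp only [Real.norm_eq_abs, Real.abs_exp]
    gcongr
  · exact (aux_lap_int _ hg2 hb2 (x / 2) (by positivity)).norm
  · filter_upwards with z t ht
    have h1 : HasDerivAt (fun t : ℝ => -(t * z)) (-z) t := by
      simpa using ((hasDerivAt_id' t).mul_const z).fun_neg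
    have := h1.exp.mul_const (g z)
    refine this.congr_deriv ?_
    ring

lemma prim_int (f : ℝ → ℝ) (hf : ContinuousOn f (Ioi 0))
    (hb : ∀ z, 0 < z → ∃ C, ∀ u, 0 < u → u ≤ z → |f u| ≤ C) (z : ℝ) (hz : 0 < z) :
    IntervalIntegrable f volume 0 z := by
  rw [intervalIntegrable_iff_integrableOn_Ioc_of_le hz.le]
  obtain ⟨C, hC⟩ := hb z hz
  refine IntegrableOn.of_bound (by simp) ?_ C ?_
  · exact (hf.mono Ioc_subset_Ioi_self).aestronglyMeasurable measurableSet_Ioc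
  · filter_upwards [ae_restrict_mem measurableSet_Ioc] with u hu
    exact hC u hu.1 hu.2

lemma prim_deriv (f : ℝ → ℝ) (hf : ContinuousOn f (Ioi 0))
    (hi : ∀ z, 0 < z → IntervalIntegrable f volume 0 z) (z : ℝ) (hz : 0 < z) :
    HasDerivAt (fun t => ∫ u in (0:ℝ)..t, f u) (f z) z :=
  intervalIntegral.integral_hasDerivAt_right (hi z hz)
    (hf.stronglyMeasurableAtFilter isOpen_Ioi z hz) (hf.continuousAt (Ioi_mem_nhds hz))

lemma prim_tendsto (f : ℝ → ℝ)
    (hi : ∀ z, 0 < z → IntervalIntegrable f volume 0 z) :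
    Filter.Tendsto (fun t => ∫ u in (0:ℝ)..t, f u) (nhdsWithin 0 (Ioi 0)) (nhds 0) := by
  have h := intervalIntegral.continuousOn_primitive_interval' (hi 1 one_pos) (left_mem_uIcc)
  have h2 := h 0 left_mem_uIcc
  rw [uIcc_of_le zero_le_one] at h2
  have h3 : ContinuousWithinAt (fun t => ∫ u in (0:ℝ)..t, f u) (Ioo 0 1) 0 :=
    h2.mono Ioo_subset_Icc_self
  unfold ContinuousWithinAt at h3
  rw [nhdsWithin_Ioo_eq_nhdsGT one_pos] at h3
  simpa using h3

/-- comparison of `m` at different points -/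
lemma core_m (p m : ℝ → ℝ) (K ϑ : ℝ) (hϑ : 0 < ϑ) (hK : 0 ≤ K)
    (hb : ∀ z, 0 < z → |p z| ≤ K) (hpos : ∀ z, ϑ ≤ z → 0 ≤ p z)
    (hd : ∀ z, 0 < z → HasDerivAt m (p z) z) (u z : ℝ) (hu : 0 < u) (huz : u ≤ z) :
    m u - m z ≤ K * ϑ := by
  have hcont : ContinuousOn m (Ioi 0) := fun t ht => (hd t ht).continuousAt.continuousWithinAt
  have hmono : MonotoneOn m (Ici ϑ) := by
    refine monotoneOn_of_deriv_nonneg (convex_Ici _)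
      (hcont.mono fun t ht => lt_of_lt_of_le hϑ ht) ?_ ?_
    · intro t ht
      rw [interior_Ici] at ht
      exact (hd t (hϑ.trans ht)).differentiableAt.differentiableWithinAt
    · intro t ht
      rw [interior_Ici] at ht
      rw [(hd t (hϑ.trans ht)).deriv]
      exact hpos t (le_of_lt ht)
  have hmono2 : MonotoneOn (fun t => m t + K * t) (Ioi 0) := by
    refine monotoneOn_of_deriv_nonneg (convex_Ioi _) (by fun_prop) ?_ ?_
    · intro t ht
      rw [interior_Ioi] at ht
      exact ((hd t ht).add ((hasDerivAt_id t).const_mul K)).differentiableAt.differentiableWithinAt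
    · intro t ht
      rw [interior_Ioi] at ht
      have : HasDerivAt (fun t => m t + K * t) (p t + K * 1) t :=
        (hd t ht).add ((hasDerivAt_id' t).const_mul K)
      rw [this.deriv]
      have := neg_le_of_abs_le (hb t ht)
      linarith
  rcases le_total z ϑ with h | h
  · have := hmono2 hu (hu.trans_le huz : (0:ℝ) < z) huz
    simp only at this
    nlinarith
  · rcases le_total ϑ u with h' | h'
    · have := hmono h' h huz
      nlinarith
    · have h1 := hmono2 hu hϑ h'
      have h2 := hmono (self_mem_Ici) h h
      simp only at h1
      nlinarith

/-- linear growth of a primitive whose derivative tends to zero -/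
lemma core_J (J q : ℝ → ℝ) (hd : ∀ z, 0 < z → HasDerivAt J (q z) z)
    (hq0 : ∀ z, 0 < z → 0 ≤ q z)
    (hq : ∀ ε, 0 < ε → ∃ z₀, 0 < z₀ ∧ ∀ z, z₀ ≤ z → q z ≤ ε) :
    MonotoneOn J (Ioi 0) ∧ ∀ ε, 0 < ε → ∃ C, ∀ z, 0 < z → J z ≤ C + ε * z := by
  have hcont : ContinuousOn J (Ioi 0) := fun t ht => (hd t ht).continuousAt.continuousWithinAt
  have hmono : MonotoneOn J (Ioi 0) := by
    refine monotoneOn_of_deriv_nonneg (convex_Ioi _) hcont ?_ ?_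
    · intro t ht
      rw [interior_Ioi] at ht
      exact (hd t ht).differentiableAt.differentiableWithinAt
    · intro t ht
      rw [interior_Ioi] at ht
      rw [(hd t ht).deriv]
      exact hq0 t ht
  refine ⟨hmono, fun ε hε => ?_⟩
  obtain ⟨z₀, hz₀, h⟩ := hq ε hε
  have hanti : AntitoneOn (fun t => J t - ε * t) (Ici z₀) := by
    have hsub : Ici z₀ ⊆ Ioi 0 := fun t ht => lt_of_lt_of_le hz₀ ht
    have hd' : ∀ t, 0 < t → HasDerivAt (fun t => J t - ε * t) (q t - ε * 1) t := fun t ht =>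
      (hd t ht).sub ((hasDerivAt_id' t).const_mul ε)
    refine antitoneOn_of_deriv_nonpos (convex_Ici _)
      (ContinuousOn.sub (hcont.mono hsub) (by fun_prop)) ?_ ?_
    · intro t ht
      rw [interior_Ici] at ht
      exact (hd' t (hz₀.trans ht)).differentiableAt.differentiableWithinAt
    · intro t ht
      rw [interior_Ici] at ht
      rw [(hd' t (hz₀.trans ht)).deriv]
      have := h t (le_of_lt ht)
      linarith
  refine ⟨J z₀, fun z hz => ?_⟩
  rcases le_total z z₀ with h' | h'
  · have := hmono hz hz₀ h'
    nlinarith [mul_pos hε hz]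
  · have := hanti (self_mem_Ici) h' h'
    simp only at this
    nlinarith

lemma core (ω p m I y r Φ : ℝ → ℝ) (c σ K ϑ lam : ℝ) (hc : 0 < c) (hσ : 0 < σ) (hϑ : 0 < ϑ)
    (hK : 0 ≤ K) (hlam : 0 < lam)
    (hω : ∀ z, ω z = c * z + σ ^ 2 * z ^ 2 / 2)
    (hp : ContinuousOn p (Ioi 0)) (hb : ∀ z, 0 < z → |p z| ≤ K) (hpos : ∀ z, ϑ ≤ z → 0 ≤ p z)
    (hm : ∀ z, m z = ∫ u in (0:ℝ)..z, p u)
    (hI : ∀ z, I z = ∫ u in (0:ℝ)..z, Real.exp (m u))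
    (hr : ∀ z, 0 < z → r (I z) = Real.exp (-(m z)) / Real.sqrt (ω z))
    (hy : ∀ z ∈ Ioi (0:ℝ), 0 ≤ y z ∧ HasDerivAt y ((y z) ^ 2 - lam * (r z) ^ 2) z)
    (hyint : IntegrableOn y (Ioo 0 1) volume)
    (hybound : ∃ Kc : Set ℝ, IsCompact Kc ∧ Kc ⊆ Ioi 0 ∧
      ∀ z ∈ Ioi (0:ℝ) \ Kc, y z ≤ Real.sqrt lam * r z)
    (hΦ : ∀ z, Φ z = (Real.exp (-(m z)) / ω z) *
      Real.exp (-(∫ v in (0:ℝ)..(I z), y v)) *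
      (∫ u in (0:ℝ)..z, Real.exp (m u + 2 * ∫ v in (0:ℝ)..(I u), y v))) :
    ContinuousOn Φ (Ioi 0) ∧
    (∀ ε, 0 < ε → ∃ C, ∀ z, 0 < z → |Φ z| ≤ C * Real.exp (ε * z)) ∧
    ∃ F A : ℝ → ℝ, (∀ z, 0 < z → F z = ω z * Φ z ∧ HasDerivAt F (A z - p z * F z) z ∧
      HasDerivAt A (lam * Φ z) z) ∧
      Filter.Tendsto F (nhdsWithin 0 (Ioi 0)) (nhds 0) ∧
      Filter.Tendsto A (nhdsWithin 0 (Ioi 0)) (nhds 1) ∧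
      (∀ x, 0 < x → Filter.Tendsto (fun z => F z * Real.exp (-(z * x))) Filter.atTop (nhds 0)) ∧
      (∀ x, 0 < x → Filter.Tendsto (fun z => A z * Real.exp (-(z * x))) Filter.atTop (nhds 0)) := by
  have hωpos : ∀ z, 0 < z → 0 < ω z := fun z hz => by rw [hω]; positivity
  -- m
  have hpi := prim_int p hp (fun z _ => ⟨K, fun u hu _ => hb u hu⟩)
  have hmd : ∀ z, 0 < z → HasDerivAt m (p z) z := by
    rw [show m = _ from funext hm]; exact prim_deriv p hp hpi
  have hm0 : Filter.Tendsto m (nhdsWithin 0 (Ioi 0)) (nhds 0) := by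
    rw [show m = _ from funext hm]; exact prim_tendsto p hpi
  have hmc : ContinuousOn m (Ioi 0) := fun t ht => (hmd t ht).continuousAt.continuousWithinAt
  have hmN := core_m p m K ϑ hϑ hK hb hpos hmd
  have hmN0 : ∀ z, 0 < z → -(K * ϑ) ≤ m z := by
    intro z hz
    have h1 : Filter.Tendsto (fun u => m u - m z) (nhdsWithin 0 (Ioi 0)) (nhds (0 - m z)) :=
      hm0.sub_const _
    have := le_of_tendsto h1 (b := K * ϑ) (by
      filter_upwards [Ioo_mem_nhdsGT hz] with u hu
      exact hmN u z hu.1 hu.2.le)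
    linarith
  -- I
  have hEc : ContinuousOn (fun z => Real.exp (m z)) (Ioi 0) := by fun_prop
  have hEi := prim_int (fun z => Real.exp (m z)) hEc (fun z hz =>
    ⟨Real.exp (m z + K * ϑ), fun u hu huz => by
      rw [Real.abs_exp]; gcongr; linarith [hmN u z hu huz]⟩)
  have hId : ∀ z, 0 < z → HasDerivAt I (Real.exp (m z)) z := by
    rw [show I = _ from funext hI]; exact prim_deriv _ hEc hEi
  have hI0 : Filter.Tendsto I (nhdsWithin 0 (Ioi 0)) (nhds 0) := by
    rw [show I = _ from funext hI]; exact prim_tendsto _ hEi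
  have hIlow : ∀ z, 0 < z → Real.exp (-(K * ϑ)) * z ≤ I z := by
    intro z hz
    rw [hI]
    have : ∫ u in (0:ℝ)..z, Real.exp (-(K * ϑ)) = Real.exp (-(K * ϑ)) * z := by
      simp [mul_comm]
    rw [← this]
    refine intervalIntegral.integral_mono_on_of_le_Ioo hz.le (by simp) (hEi z hz) ?_
    intro u hu
    gcongr
    exact hmN0 u hu.1
  have hIpos : ∀ z, 0 < z → 0 < I z := fun z hz => lt_of_lt_of_le (by positivity) (hIlow z hz)
  -- y
  have hyc : ContinuousOn y (Ioi 0) := fun t ht => (hy t ht).2.continuousAt.continuousWithinAt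
  have hyi : ∀ z, 0 < z → IntervalIntegrable y volume 0 z := by
    have h0 : IntervalIntegrable y volume 0 1 := by
      rw [intervalIntegrable_iff_integrableOn_Ioo_of_le zero_le_one]; exact hyint
    intro z hz
    refine h0.trans (ContinuousOn.intervalIntegrable (hyc.mono ?_))
    intro t ht
    exact lt_of_lt_of_le (lt_min one_pos hz) ht.1
  have hYd := prim_deriv y hyc hyi
  have hY0 := prim_tendsto y hyi
  -- J
  set J : ℝ → ℝ := fun z => ∫ v in (0:ℝ)..(I z), y v with hJ
  set q : ℝ → ℝ := fun z => y (I z) * Real.exp (m z) with hq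
  have hJd : ∀ z, 0 < z → HasDerivAt J (q z) z := fun z hz =>
    (hYd (I z) (hIpos z hz)).comp z (hId z hz)
  have hJ0 : Filter.Tendsto J (nhdsWithin 0 (Ioi 0)) (nhds 0) := by
    refine hY0.comp (tendsto_nhdsWithin_iff.2 ⟨hI0, ?_⟩)
    filter_upwards [self_mem_nhdsWithin] with z hz using hIpos z hz
  have hq0 : ∀ z, 0 < z → 0 ≤ q z := fun z hz =>
    mul_nonneg (hy _ (hIpos z hz)).1 (Real.exp_pos _).le
  have hqd : ∀ z, 0 < z → HasDerivAt q (q z ^ 2 + p z * q z - lam / ω z) z := by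
    intro z hz
    have h1 : HasDerivAt (fun z => y (I z)) _ z := (hy _ (hIpos z hz)).2.comp z (hId z hz)
    have h2 := h1.mul (hmd z hz).exp
    refine h2.congr_deriv ?_
    rw [hr z hz, div_pow, Real.sq_sqrt (hωpos z hz).le, Real.exp_neg]
    have := (hωpos z hz).ne'
    simp only [hq]
    field_simp
    ring
  -- bound on q
  have hqb : ∃ δ M : ℝ, 0 < δ ∧ ∀ z, 0 < z → (I z < δ ∨ M < I z) →
      q z ≤ Real.sqrt lam / Real.sqrt (ω z) := by
    obtain ⟨Kc, hKc, hsub, hle⟩ := hybound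
    obtain ⟨M, hM⟩ := hKc.bddAbove
    have hδ : ∃ δ, 0 < δ ∧ ∀ t ∈ Kc, δ ≤ t := by
      rcases Kc.eq_empty_or_nonempty with h | h
      · exact ⟨1, one_pos, by simp [h]⟩
      · obtain ⟨t, ht, ht2⟩ := hKc.exists_isLeast h
        exact ⟨t, hsub ht, ht2⟩
    obtain ⟨δ, hδ, hδ2⟩ := hδ
    refine ⟨δ, M, hδ, fun z hz h => ?_⟩
    have hnot : I z ∉ Kc := by
      intro hin
      have := hδ2 _ hin
      have := hM hin
      rcases h with h | h <;> linarith
    have h1 := hle (I z) ⟨hIpos z hz, hnot⟩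
    rw [hr z hz] at h1
    calc q z ≤ Real.sqrt lam * (Real.exp (-(m z)) / Real.sqrt (ω z)) * Real.exp (m z) := by
          simp only [hq]; gcongr
      _ = _ := by rw [Real.exp_neg]; field_simp
  obtain ⟨δ, M, hδ, hqb⟩ := hqb
  have hqε : ∀ ε, 0 < ε → ∃ z₀, 0 < z₀ ∧ ∀ z, z₀ ≤ z → q z ≤ ε := by
    intro ε hε
    refine ⟨max 1 (max ((|M| + 1) * Real.exp (K * ϑ)) (lam / ε ^ 2 / c)), by positivity, ?_⟩
    intro z hz
    have h1 : 1 ≤ z := (le_max_left _ _).trans hz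
    have h2 : (|M| + 1) * Real.exp (K * ϑ) ≤ z :=
      ((le_max_left _ _).trans (le_max_right _ _)).trans hz
    have h3 : lam / ε ^ 2 / c ≤ z := ((le_max_right _ _).trans (le_max_right _ _)).trans hz
    have hz0 : 0 < z := by linarith
    refine (hqb z hz0 (Or.inr ?_)).trans ?_
    · have h4 := hIlow z hz0
      have h5 : Real.exp (-(K * ϑ)) * ((|M| + 1) * Real.exp (K * ϑ)) ≤ Real.exp (-(K * ϑ)) * z := by
        gcongr
      rw [Real.exp_neg] at h5 h4
      have h6 : (Real.exp (K * ϑ))⁻¹ * ((|M| + 1) * Real.exp (K * ϑ)) = |M| + 1 := by field_simp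
      have := le_abs_self M
      linarith
    · rw [← Real.sqrt_div hlam.le]
      refine Real.sqrt_le_iff.2 ⟨hε.le, ?_⟩
      rw [div_le_iff₀ (hωpos z hz0), hω]
      rw [div_le_iff₀ hc, div_le_iff₀ (by positivity)] at h3
      have : 0 ≤ ε ^ 2 * (σ ^ 2 * z ^ 2 / 2) := by positivity
      nlinarith
  obtain ⟨hJm, hJb⟩ := core_J J q hJd hq0 hqε
  -- G
  set G : ℝ → ℝ := fun z => ∫ u in (0:ℝ)..z, Real.exp (m u + 2 * J u) with hG
  have hJc : ContinuousOn J (Ioi 0) := fun t ht => (hJd t ht).continuousAt.continuousWithinAt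
  have hgc : ContinuousOn (fun u => Real.exp (m u + 2 * J u)) (Ioi 0) := by fun_prop
  have hgb : ∀ z, 0 < z → ∀ u, 0 < u → u ≤ z →
      Real.exp (m u + 2 * J u) ≤ Real.exp (m z + K * ϑ + 2 * J z) := by
    intro z hz u hu huz
    have h1 := hJm hu hz huz
    have h2 := hmN u z hu huz
    gcongr
    linarith
  have hgi := prim_int _ hgc (fun z hz => ⟨_, fun u hu huz => by
    rw [Real.abs_exp]; exact hgb z hz u hu huz⟩)
  have hGd : ∀ z, 0 < z → HasDerivAt G (Real.exp (m z + 2 * J z)) z := prim_deriv _ hgc hgi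
  have hG0 : ∀ z, 0 < z → 0 ≤ G z := fun z hz =>
    intervalIntegral.integral_nonneg hz.le (fun u _ => (Real.exp_pos _).le)
  have hGb : ∀ z, 0 < z → G z ≤ z * Real.exp (m z + K * ϑ + 2 * J z) := by
    intro z hz
    have : ∫ u in (0:ℝ)..z, Real.exp (m z + K * ϑ + 2 * J z)
      = z * Real.exp (m z + K * ϑ + 2 * J z) := by simp
    rw [← this]
    refine intervalIntegral.integral_mono_on_of_le_Ioo hz.le (hgi z hz) (by simp) ?_
    intro u hu
    exact hgb z hz u hu.1 hu.2.le
  -- F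
  set F : ℝ → ℝ := fun z => Real.exp (-(m z)) * Real.exp (-(J z)) * G z with hF
  set A : ℝ → ℝ := fun z => Real.exp (J z) - q z * F z with hA
  have hFΦ : ∀ z, Φ z = F z / ω z := by
    intro z; rw [hΦ]; simp only [hF, hG, hJ]; ring
  have hFd : ∀ z, 0 < z → HasDerivAt F (A z - p z * F z) z := by
    intro z hz
    have h := (((hmd z hz).fun_neg.exp).mul ((hJd z hz).fun_neg.exp)).mul (hGd z hz)
    refine h.congr_deriv ?_
    simp only [hA, hF]
    have : Real.exp (m z + 2 * J z) = Real.exp (m z) * Real.exp (J z) * Real.exp (J z) := by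
      rw [← Real.exp_add, ← Real.exp_add]; ring_nf
    simp only [Pi.mul_apply]
    rw [this, Real.exp_neg, Real.exp_neg]
    field_simp
    ring
  have hAd : ∀ z, 0 < z → HasDerivAt A (lam * Φ z) z := by
    intro z hz
    have h := (hJd z hz).exp.sub ((hqd z hz).mul (hFd z hz))
    refine h.congr_deriv ?_
    rw [hFΦ]
    have := (hωpos z hz).ne'
    simp only [hA]
    field_simp
    ring
  have hFc : ContinuousOn F (Ioi 0) := fun t ht => (hFd t ht).continuousAt.continuousWithinAt
  have hF0 : ∀ z, 0 < z → 0 ≤ F z := fun z hz =>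
    mul_nonneg (by positivity) (hG0 z hz)
  have hFb : ∀ z, 0 < z → F z ≤ z * (Real.exp (K * ϑ) * Real.exp (J z)) := by
    intro z hz
    calc F z ≤ Real.exp (-(m z)) * Real.exp (-(J z)) * (z * Real.exp (m z + K * ϑ + 2 * J z)) := by
          simp only [hF]; gcongr; exact hGb z hz
      _ = z * (Real.exp (-(m z)) * Real.exp (-(J z)) * Real.exp (m z + K * ϑ + 2 * J z)) := by ring
      _ = _ := by
        rw [← Real.exp_add, ← Real.exp_add, ← Real.exp_add]; ring_nf
  have hJe : ∀ ε, 0 < ε → ∃ C, 0 < C ∧ ∀ z, 0 < z → Real.exp (J z) ≤ C * Real.exp (ε * z) := by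
    intro ε hε
    obtain ⟨C, hC⟩ := hJb ε hε
    refine ⟨Real.exp C, by positivity, fun z hz => ?_⟩
    rw [← Real.exp_add]
    gcongr
    exact hC z hz
  -- decay
  have hexp : ∀ x, 0 < x → Filter.Tendsto (fun z : ℝ => Real.exp (-(x * z))) Filter.atTop (nhds 0) :=
    fun x hx => Real.tendsto_exp_neg_atTop_nhds_zero.comp (Filter.tendsto_id.const_mul_atTop hx)
  have hJlim : ∀ x, 0 < x → Filter.Tendsto (fun z => Real.exp (J z) * Real.exp (-(z * x)))
      Filter.atTop (nhds 0) := by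
    intro x hx
    obtain ⟨C, hC0, hC⟩ := hJe (x / 2) (by positivity)
    have h1 := (hexp (x / 2) (by positivity)).const_mul C
    rw [mul_zero] at h1
    refine squeeze_zero' (Filter.Eventually.of_forall fun z => by positivity) ?_ h1
    filter_upwards [Filter.eventually_gt_atTop 0] with z hz
    calc _ ≤ C * Real.exp (x / 2 * z) * Real.exp (-(z * x)) := by gcongr; exact hC z hz
      _ = _ := by rw [mul_assoc, ← Real.exp_add]; ring_nf
  have hFlim : ∀ x, 0 < x → Filter.Tendsto (fun z => F z * Real.exp (-(z * x)))
      Filter.atTop (nhds 0) := by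
    intro x hx
    have h1 := (hJlim (x / 2) (by positivity)).const_mul (2 / x * Real.exp (K * ϑ))
    rw [mul_zero] at h1
    refine squeeze_zero' ?_ ?_ h1
    · filter_upwards [Filter.eventually_gt_atTop 0] with z hz
      exact mul_nonneg (hF0 z hz) (Real.exp_pos _).le
    filter_upwards [Filter.eventually_gt_atTop 0] with z hz
    have h2 : z ≤ 2 / x * Real.exp (x / 2 * z) := by
      have := Real.add_one_le_exp (x / 2 * z)
      calc z = 2 / x * (x / 2 * z) := by field_simp
        _ ≤ _ := by gcongr; linarith
    calc F z * Real.exp (-(z * x))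
        ≤ (z * (Real.exp (K * ϑ) * Real.exp (J z))) * Real.exp (-(z * x)) := by
          gcongr; exact hFb z hz
      _ ≤ ((2 / x * Real.exp (x / 2 * z)) * (Real.exp (K * ϑ) * Real.exp (J z)))
            * Real.exp (-(z * x)) := by gcongr
      _ = 2 / x * Real.exp (K * ϑ) * (Real.exp (J z) * (Real.exp (x / 2 * z) * Real.exp (-(z * x)))) := by
          ring
      _ = _ := by rw [← Real.exp_add (x / 2 * z)]; ring_nf
  refine ⟨?_, ?_, F, A, fun z hz => ⟨?_, hFd z hz, hAd z hz⟩, ?_, ?_, hFlim, ?_⟩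
  · rw [show Φ = _ from funext hFΦ]
    refine hFc.div ?_ (fun z hz => (hωpos z hz).ne')
    rw [show ω = _ from funext hω]
    fun_prop
  · intro ε hε
    obtain ⟨C, hC0, hC⟩ := hJe ε hε
    refine ⟨Real.exp (K * ϑ) / c * C, fun z hz => ?_⟩
    rw [hFΦ, abs_of_nonneg (div_nonneg (hF0 z hz) (hωpos z hz).le), div_le_iff₀ (hωpos z hz)]
    have h1 : c * z ≤ ω z := by rw [hω]; nlinarith [mul_nonneg (sq_nonneg σ) (sq_nonneg z)]
    calc F z ≤ z * (Real.exp (K * ϑ) * Real.exp (J z)) := hFb z hz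
      _ ≤ z * (Real.exp (K * ϑ) * (C * Real.exp (ε * z))) := by gcongr; exact hC z hz
      _ = Real.exp (K * ϑ) / c * C * Real.exp (ε * z) * (c * z) := by field_simp
      _ ≤ _ := by gcongr
  · rw [hFΦ]
    have := (hωpos z hz).ne'
    field_simp
  · -- F at zero
    have hid : Filter.Tendsto (fun z : ℝ => z) (nhdsWithin 0 (Ioi 0)) (nhds 0) :=
      tendsto_nhdsWithin_of_tendsto_nhds Filter.tendsto_id
    have h1 := hid.mul ((hJ0.rexp).const_mul (Real.exp (K * ϑ)))
    rw [zero_mul] at h1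
    refine squeeze_zero' ?_ ?_ h1
    · filter_upwards [self_mem_nhdsWithin] with z hz using hF0 z hz
    · filter_upwards [self_mem_nhdsWithin] with z hz using hFb z hz
  · -- A at zero
    have hsq : Filter.Tendsto (fun z : ℝ => Real.sqrt z) (nhdsWithin 0 (Ioi 0)) (nhds 0) := by
      have := (Real.continuous_sqrt.tendsto 0)
      rw [Real.sqrt_zero] at this
      exact tendsto_nhdsWithin_of_tendsto_nhds this
    have h1 := hsq.mul ((hJ0.rexp).const_mul (Real.sqrt lam / Real.sqrt c * Real.exp (K * ϑ)))
    rw [zero_mul] at h1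
    have h2 : Filter.Tendsto (fun z => q z * F z) (nhdsWithin 0 (Ioi 0)) (nhds 0) := by
      refine squeeze_zero' ?_ ?_ h1
      · filter_upwards [self_mem_nhdsWithin] with z hz using mul_nonneg (hq0 z hz) (hF0 z hz)
      · filter_upwards [self_mem_nhdsWithin, hI0.eventually (gt_mem_nhds hδ)] with z hz hz2
        have hz' : (0:ℝ) < z := hz
        have h3 := hqb z hz (Or.inl hz2)
        have h4 : Real.sqrt lam / Real.sqrt (ω z) ≤ Real.sqrt lam / (Real.sqrt c * Real.sqrt z) := by
          rw [← Real.sqrt_mul hc.le]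
          gcongr
          rw [hω]; nlinarith [mul_nonneg (sq_nonneg σ) (sq_nonneg z)]
        calc q z * F z ≤ (Real.sqrt lam / (Real.sqrt c * Real.sqrt z)) *
              (z * (Real.exp (K * ϑ) * Real.exp (J z))) := by
              gcongr
              · exact hF0 z hz
              · exact h3.trans h4
              · exact hFb z hz
          _ = (Real.sqrt lam / (Real.sqrt c * Real.sqrt z)) *
              ((Real.sqrt z * Real.sqrt z) * (Real.exp (K * ϑ) * Real.exp (J z))) := by
              rw [Real.mul_self_sqrt hz'.le]
          _ = _ := by
              have := Real.sqrt_pos.2 hz'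
              field_simp
    have h3 := hJ0.rexp.sub h2
    simpa using h3
  · intro x hx
    have h1 := (hJlim x hx).add (hFlim x hx)
    rw [add_zero] at h1
    obtain ⟨z₀, hz₀, hq1⟩ := hqε 1 one_pos
    refine squeeze_zero_norm' ?_ h1
    filter_upwards [Filter.eventually_ge_atTop z₀] with z hz
    have hz' : 0 < z := hz₀.trans_le hz
    have h5 := mul_le_mul_of_nonneg_right (hq1 z hz) (hF0 z hz')
    have h6 := mul_nonneg (hq0 z hz') (hF0 z hz')
    rw [norm_mul, Real.norm_eq_abs, Real.norm_eq_abs, Real.abs_exp, ← add_mul]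
    gcongr
    simp only [hA]
    rw [abs_le]
    have := Real.exp_pos (J z)
    constructor <;> linarith

lemma ftc_id (ω ψ Φ F A : ℝ → ℝ) (lam x : ℝ)
    (hω : ∀ z, 0 < z → 0 < ω z)
    (hFA : ∀ z, 0 < z → F z = ω z * Φ z ∧ HasDerivAt F (A z - ψ z / ω z * F z) z ∧
      HasDerivAt A (lam * Φ z) z)
    (hF0 : Filter.Tendsto F (nhdsWithin 0 (Ioi 0)) (nhds 0))
    (hA0 : Filter.Tendsto A (nhdsWithin 0 (Ioi 0)) (nhds 1))
    (hF1 : Filter.Tendsto (fun z => F z * Real.exp (-(z * x))) Filter.atTop (nhds 0))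
    (hA1 : Filter.Tendsto (fun z => A z * Real.exp (-(z * x))) Filter.atTop (nhds 0))
    (hIntg : IntegrableOn (fun z => (x * ψ z + x ^ 2 * ω z - lam) * Φ z * Real.exp (-(z * x)))
      (Ioi 0)) :
    (∫ z in Ioi (0:ℝ), (x * ψ z + x ^ 2 * ω z - lam) * Φ z * Real.exp (-(z * x))) = 1 := by
  set H : ℝ → ℝ := fun z => -((x * F z + A z) * Real.exp (-(z * x))) with hH
  have key := integral_Ioi_of_hasDerivAt_of_tendsto (a := 0) (m := 0)
    (f := Function.update H 0 (-1))
    (f' := fun z => (x * ψ z + x ^ 2 * ω z - lam) * Φ z * Real.exp (-(z * x))) ?_ ?_ hIntg ?_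
  · rw [key]; simp
  · rw [continuousWithinAt_update_same]
    have hs : Ici (0:ℝ) \ {0} = Ioi 0 := by
      ext t; simp [lt_iff_le_and_ne, eq_comm]
    rw [hs]
    have he : Filter.Tendsto (fun z : ℝ => Real.exp (-(z * x))) (nhdsWithin 0 (Ioi 0)) (nhds 1) := by
      have : Continuous (fun z : ℝ => Real.exp (-(z * x))) := by fun_prop
      have h := this.tendsto 0
      simp only [zero_mul, neg_zero, Real.exp_zero] at h
      exact tendsto_nhdsWithin_of_tendsto_nhds h
    have := (((hF0.const_mul x).add hA0).mul he).neg
    simp only [mul_zero, zero_add, mul_one] at this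
    exact this
  · intro z hz
    have hz' : (0:ℝ) < z := hz
    obtain ⟨h1, h2, h3⟩ := hFA z hz
    have h4 : HasDerivAt (fun z : ℝ => -(z * x)) (-x) z := by
      simpa using ((hasDerivAt_id' z).mul_const x).fun_neg
    have h5 := (((h2.const_mul x).fun_add h3).fun_mul h4.exp).fun_neg
    have h6 : HasDerivAt H ((x * ψ z + x ^ 2 * ω z - lam) * Φ z * Real.exp (-(z * x))) z := by
      refine h5.congr_deriv ?_
      rw [h1]
      have := (hω z hz).ne'
      field_simp
      ring
    refine h6.congr_of_eventuallyEq ?_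
    filter_upwards [Ioi_mem_nhds hz'] with t ht
    exact Function.update_of_ne (ne_of_gt ht) _ _
  · have h1 := ((hF1.const_mul x).add hA1).neg
    simp only [mul_zero, add_zero, neg_zero] at h1
    refine h1.congr' ?_
    filter_upwards [Filter.eventually_gt_atTop 0] with t ht
    rw [Function.update_of_ne (ne_of_gt ht)]
    simp only [hH]
    ring

lemma fubini_id (μ : Measure ℝ)
    (hμ2 : ∫⁻ x in Ioi (0:ℝ), ENNReal.ofReal (min x (x ^ 2)) ∂μ < ⊤)
    (g : ℝ → ℝ) (hg : IntegrableOn (fun z => z * g z) (Ioi 0))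
    (hg2 : IntegrableOn (fun z => z * (z * g z)) (Ioi 0))
    (hgc : ContinuousOn g (Ioi 0)) :
    (∫ v in Ioi (0:ℝ), (∫ z in Ioi (0:ℝ),
      g z * (Real.exp (-(z * v)) - 1 + (if v < 1 then z * v else 0))) ∂μ) =
    ∫ z in Ioi (0:ℝ), g z *
      ∫ v in Ioi (0:ℝ), (Real.exp (-(z * v)) - 1 + (if v < 1 then z * v else 0)) ∂μ := by
  have := aux_sfin μ hμ2
  have hmin := aux_min μ hμ2
  rw [integral_integral_swap]
  · simp_rw [integral_const_mul]
  · have hd : Integrable (fun p : ℝ × ℝ => min p.1 (p.1 ^ 2) * (|p.2 * g p.2| + |p.2 * (p.2 * g p.2)|))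
        ((μ.restrict (Ioi 0)).prod (volume.restrict (Ioi 0))) :=
      hmin.mul_prod (hg.abs.add hg2.abs)
    refine hd.mono' ?_ ?_
    · have h1 : AEStronglyMeasurable (fun p : ℝ × ℝ => g p.2)
          ((μ.restrict (Ioi 0)).prod (volume.restrict (Ioi 0))) :=
        (hgc.aestronglyMeasurable measurableSet_Ioi).comp_snd
      have h2 : Measurable (fun p : ℝ × ℝ => (if p.1 < 1 then p.2 * p.1 else 0)) :=
        Measurable.ite (measurableSet_lt measurable_fst measurable_const) (by fun_prop) (by fun_prop)
      have h3 : Measurable (fun p : ℝ × ℝ =>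
        (Real.exp (-(p.2 * p.1)) - 1 + (if p.1 < 1 then p.2 * p.1 else 0))) := by fun_prop
      exact h1.mul h3.aestronglyMeasurable
    · have e1 : ∀ᵐ p ∂((μ.restrict (Ioi (0:ℝ))).prod (volume.restrict (Ioi (0:ℝ)))), p.1 ∈ Ioi (0:ℝ) :=
        Measure.quasiMeasurePreserving_fst.ae (ae_restrict_mem measurableSet_Ioi)
      have e2 : ∀ᵐ p ∂((μ.restrict (Ioi (0:ℝ))).prod (volume.restrict (Ioi (0:ℝ)))), p.2 ∈ Ioi (0:ℝ) :=
        Measure.quasiMeasurePreserving_snd.ae (ae_restrict_mem measurableSet_Ioi)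
      filter_upwards [e1, e2] with p hp1 hp2
      have hp2' : (0:ℝ) < p.2 := hp2
      have hk := aux_kernel p.2 p.1 hp2'.le hp1
      simp only [Function.uncurry]
      rw [norm_mul, Real.norm_eq_abs, Real.norm_eq_abs]
      refine (mul_le_mul_of_nonneg_left hk (abs_nonneg _)).trans (le_of_eq ?_)
      rw [abs_mul, abs_mul, abs_mul, abs_of_pos hp2']
      ring

/-- With y, Φ, h as in the paper, for every x > 0 the function h satisfies the eigenvalue
equation 𝒰h(x) = λh(x) for the generator 𝒰 of the logistic CB-process in a Brownian random
environment; equivalently ∫_0^∞ (xψ(z) + x²ω(z) − λ)Φ(z)e^{−zx} dz = 1. -/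
theorem stmt_18
    (b γ c σ : ℝ) (μ : Measure ℝ)
    (hγ : 0 ≤ γ) (hc : 0 < c) (hσ : 0 < σ)
    (hμ0 : μ (Iic 0) = 0)
    (hμ2 : ∫⁻ x in Ioi (0:ℝ), ENNReal.ofReal (min x (x ^ 2)) ∂μ < ⊤)
    (hμlog : ∫⁻ x in Ioi (1:ℝ), ENNReal.ofReal (Real.log x) ∂μ < ⊤)
    (ψ ω m I Iinv r : ℝ → ℝ)
    (hψ : ∀ u, ψ u = -(b * u) + γ ^ 2 * u ^ 2 +
      ∫ x in Ioi (0:ℝ), (Real.exp (-(u * x)) - 1 + (if x < 1 then u * x else 0)) ∂μ)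
    (hgen : ∃ ϑ : ℝ, 0 ≤ ϑ ∧ ∀ z, ϑ ≤ z → 0 < ψ z)
    (hω : ∀ z, ω z = c * z + σ ^ 2 * z ^ 2 / 2)
    (hm : ∀ lam, m lam = ∫ u in (0:ℝ)..lam, ψ u / ω u)
    (hI : ∀ lam, I lam = ∫ u in (0:ℝ)..lam, Real.exp (m u))
    (hIinv_left : ∀ x, 0 ≤ x → Iinv (I x) = x)
    (hIinv_right : ∀ z, 0 ≤ z → I (Iinv z) = z)
    (hr : ∀ z, r z = Real.exp (-(m (Iinv z))) / Real.sqrt (ω (Iinv z)))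
    (lam : ℝ) (hlam : 0 < lam)
    (y : ℝ → ℝ)
    (hy : ∀ z ∈ Ioi (0:ℝ), 0 ≤ y z ∧ HasDerivAt y ((y z) ^ 2 - lam * (r z) ^ 2) z)
    (hy0 : Filter.Tendsto y Filter.atTop (nhds 0))
    (hyint : IntegrableOn y (Ioo 0 1) volume)
    (hybound : ∃ Kc : Set ℝ, IsCompact Kc ∧ Kc ⊆ Ioi 0 ∧
      ∀ z ∈ Ioi (0:ℝ) \ Kc, y z ≤ Real.sqrt lam * r z)
    (Φ h : ℝ → ℝ)
    (hΦ : ∀ z, Φ z = (Real.exp (-(m z)) / ω z) *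
      Real.exp (-(∫ v in (0:ℝ)..(I z), y v)) *
      (∫ u in (0:ℝ)..z, Real.exp (m u + 2 * ∫ v in (0:ℝ)..(I u), y v)))
    (hh : ∀ x, h x = 1 + lam * ∫ z in Ioi (0:ℝ), Real.exp (-(x * z)) * Φ z) :
    ∀ x : ℝ, 0 < x →
      ((b * x - c * x ^ 2) * deriv h x +
        (γ ^ 2 * x + σ ^ 2 / 2 * x ^ 2) * deriv (deriv h) x +
        x * ∫ z in Ioi (0:ℝ),
          (h (x + z) - h x - z * deriv h x * (if z < 1 then 1 else 0)) ∂μ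
        = lam * h x) ∧
      (∫ z in Ioi (0:ℝ), (x * ψ z + x ^ 2 * ω z - lam) * Φ z * Real.exp (-(z * x))) = 1 := by
  
  have hωpos : ∀ z, 0 < z → 0 < ω z := fun z hz => by rw [hω]; positivity
  obtain ⟨hψc, K, hK, hψb⟩ := aux_psi b γ μ hμ2 ψ hψ
  obtain ⟨ϑ, hϑ, hϑpos⟩ := hgen
  have hωc : ContinuousOn ω (Ioi 0) := by
    rw [show ω = _ from funext hω]; fun_prop
  have hd0 : 0 < min c (σ ^ 2 / 2) := by positivity
  obtain ⟨hΦc, hΦb, F, A, hFA, hF0, hA0, hF1, hA1⟩ :=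
    core ω (fun z => ψ z / ω z) m I y r Φ c σ (K / min c (σ ^ 2 / 2)) (max ϑ 1) lam hc hσ
      (by positivity) (by positivity) hlam hω
      (hψc.div hωc fun z hz => (hωpos z hz).ne')
      (fun z hz => by
        rw [abs_div, abs_of_pos (hωpos z hz), div_le_div_iff₀ (hωpos z hz) hd0]
        have h1 : (z + z ^ 2) * min c (σ ^ 2 / 2) ≤ ω z := by
          rw [hω]
          have h1 := mul_le_mul_of_nonneg_left (min_le_left c (σ ^ 2 / 2)) hz.le
          have h2 := mul_le_mul_of_nonneg_left (min_le_right c (σ ^ 2 / 2)) (sq_nonneg z)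
          nlinarith
        calc |ψ z| * min c (σ ^ 2 / 2) ≤ K * (z + z ^ 2) * min c (σ ^ 2 / 2) := by
              gcongr; exact hψb z hz
          _ = K * ((z + z ^ 2) * min c (σ ^ 2 / 2)) := by ring
          _ ≤ _ := by gcongr)
      (fun z hz => div_nonneg (hϑpos z ((le_max_left _ _).trans hz)).le
        (hωpos z (lt_of_lt_of_le (by positivity) hz)).le)
      hm hI (fun z hz => by rw [hr, hIinv_left z hz.le]) hy hyint hybound hΦ
  have hΦc1 : ContinuousOn (fun z => z * Φ z) (Ioi 0) := by fun_prop
  have hΦc2 : ContinuousOn (fun z => z * (z * Φ z)) (Ioi 0) := by fun_prop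
  have hΦb1 := aux_lap_mul Φ hΦb
  have hΦb2 := aux_lap_mul _ hΦb1
  have i0 := aux_lap_int Φ hΦc hΦb
  have i1 := aux_lap_int _ hΦc1 hΦb1
  have i2 := aux_lap_int _ hΦc2 hΦb2
  have hder : ∀ x, 0 < x → HasDerivAt h
      (lam * -∫ z in Ioi (0:ℝ), Real.exp (-(x * z)) * (z * Φ z)) x := by
    intro x hx
    rw [show h = _ from funext hh]
    exact ((aux_lap_deriv Φ hΦc hΦb x hx).const_mul lam).const_add 1
  intro x hx
  have hder2 : HasDerivAt (deriv h)
      (lam * - -∫ z in Ioi (0:ℝ), Real.exp (-(x * z)) * (z * (z * Φ z))) x := by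
    have := ((aux_lap_deriv _ hΦc1 hΦb1 x hx).fun_neg).const_mul lam
    refine this.congr_of_eventuallyEq ?_
    filter_upwards [Ioi_mem_nhds hx] with t ht
    exact (hder t ht).deriv
  have iB : IntegrableOn (fun z => Real.exp (-(x * z)) * (ψ z * Φ z)) (Ioi 0) := by
    have hdom : IntegrableOn (fun z => K * (|Real.exp (-(x * z)) * (z * Φ z)|
        + |Real.exp (-(x * z)) * (z * (z * Φ z))|)) (Ioi 0) :=
      ((i1 x hx).abs.add (i2 x hx).abs).const_mul K
    refine Integrable.mono' hdom ?_ ?_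
    · exact ContinuousOn.aestronglyMeasurable (by fun_prop) measurableSet_Ioi
    · filter_upwards [ae_restrict_mem measurableSet_Ioi] with z hz
      have hz' : (0:ℝ) < z := hz
      simp only [Real.norm_eq_abs, abs_mul, Real.abs_exp, abs_of_pos hz']
      calc _ ≤ Real.exp (-(x * z)) * (K * (z + z ^ 2) * |Φ z|) := by
            gcongr; exact hψb z hz
        _ = _ := by ring
  set a0 := ∫ z in Ioi (0:ℝ), Real.exp (-(x * z)) * Φ z with ha0
  set a1 := ∫ z in Ioi (0:ℝ), Real.exp (-(x * z)) * (z * Φ z) with ha1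
  set a2 := ∫ z in Ioi (0:ℝ), Real.exp (-(x * z)) * (z * (z * Φ z)) with ha2
  set B := ∫ z in Ioi (0:ℝ), Real.exp (-(x * z)) * (ψ z * Φ z) with hB
  have hsplit : (fun z => (x * ψ z + x ^ 2 * ω z - lam) * Φ z * Real.exp (-(z * x))) =
      fun z => x * (Real.exp (-(x * z)) * (ψ z * Φ z)) +
        (x ^ 2 * c) * (Real.exp (-(x * z)) * (z * Φ z)) +
        (x ^ 2 * (σ ^ 2 / 2)) * (Real.exp (-(x * z)) * (z * (z * Φ z))) -
        lam * (Real.exp (-(x * z)) * Φ z) := by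
    funext z
    rw [hω, mul_comm z x]
    ring
  have j0 := (i0 x hx).const_mul lam
  have j1 := (i1 x hx).const_mul (x ^ 2 * c)
  have j2 := (i2 x hx).const_mul (x ^ 2 * (σ ^ 2 / 2))
  have jB := iB.const_mul x
  have hIntg : IntegrableOn (fun z => (x * ψ z + x ^ 2 * ω z - lam) * Φ z * Real.exp (-(z * x)))
      (Ioi 0) := by
    rw [hsplit]
    exact ((jB.add j1).add j2).sub j0
  have hid := ftc_id ω ψ Φ F A lam x hωpos hFA hF0 hA0 (hF1 x hx) (hA1 x hx) hIntg
  refine ⟨?_, hid⟩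
  have hid2 : x * B + x ^ 2 * c * a1 + x ^ 2 * (σ ^ 2 / 2) * a2 - lam * a0 = 1 := by
    rw [← hid, hsplit, integral_sub ((jB.fun_add j1).fun_add j2) j0, integral_add (jB.fun_add j1) j2,
      integral_add jB j1, integral_const_mul, integral_const_mul, integral_const_mul,
      integral_const_mul]
  have hfub : (∫ z in Ioi (0:ℝ),
      (h (x + z) - h x - z * deriv h x * (if z < 1 then 1 else 0)) ∂μ) =
      lam * (B + b * a1 - γ ^ 2 * a2) := by
    have hf := fubini_id μ hμ2 (fun z => Real.exp (-(x * z)) * Φ z)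
      ((i1 x hx).congr (ae_of_all _ fun z => by ring))
      ((i2 x hx).congr (ae_of_all _ fun z => by ring)) (by fun_prop)
    have e1 : (∫ z in Ioi (0:ℝ),
        (h (x + z) - h x - z * deriv h x * (if z < 1 then 1 else 0)) ∂μ) =
        ∫ v in Ioi (0:ℝ), lam * (∫ z in Ioi (0:ℝ), Real.exp (-(x * z)) * Φ z *
          (Real.exp (-(z * v)) - 1 + (if v < 1 then z * v else 0))) ∂μ := by
      refine setIntegral_congr_fun measurableSet_Ioi (fun v hv => ?_)
      have hv' : (0:ℝ) < v := hv
      rw [(hder x hx).deriv, hh, hh]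
      set t : ℝ := if v < 1 then 1 else 0 with ht
      have e2 : (fun z => Real.exp (-(x * z)) * Φ z *
          (Real.exp (-(z * v)) - 1 + (if v < 1 then z * v else 0))) =
          fun z => Real.exp (-((x + v) * z)) * Φ z - Real.exp (-(x * z)) * Φ z +
            (v * t) * (Real.exp (-(x * z)) * (z * Φ z)) := by
        funext z
        have e3 : Real.exp (-((x + v) * z)) = Real.exp (-(x * z)) * Real.exp (-(z * v)) := by
          rw [← Real.exp_add]; ring_nf
        have e4 : (if v < 1 then z * v else 0) = z * v * t := by
          simp only [ht]; split_ifs <;> simp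
        rw [e3, e4]
        ring
      have k0 := i0 (x + v) (by linarith)
      have k2 : Integrable (fun z => Real.exp (-((x + v) * z)) * Φ z - Real.exp (-(x * z)) * Φ z)
          (volume.restrict (Ioi 0)) := k0.sub (i0 x hx)
      rw [e2, integral_add k2 ((i1 x hx).const_mul _), integral_sub k0 (i0 x hx),
        integral_const_mul]
      ring
    rw [e1, integral_const_mul, hf]
    congr 1
    have e5 : ∀ z, (∫ v in Ioi (0:ℝ), (Real.exp (-(z * v)) - 1 + (if v < 1 then z * v else 0)) ∂μ)
        = ψ z + b * z - γ ^ 2 * z ^ 2 := by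
      intro z; rw [hψ z]; ring
    simp only [e5]
    have e6 : (fun z => Real.exp (-(x * z)) * Φ z * (ψ z + b * z - γ ^ 2 * z ^ 2)) =
        fun z => Real.exp (-(x * z)) * (ψ z * Φ z) + b * (Real.exp (-(x * z)) * (z * Φ z)) -
          γ ^ 2 * (Real.exp (-(x * z)) * (z * (z * Φ z))) := by
      funext z; ring
    have k1 := (i1 x hx).const_mul b
    rw [e6, integral_sub (Integrable.fun_add iB k1) ((i2 x hx).const_mul _), integral_add iB k1,
      integral_const_mul, integral_const_mul]
  rw [hfub, (hder x hx).deriv, hder2.deriv, hh x]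
  linear_combination lam * hid2
end
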